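/- Let e > n be an integer, let K be a field containing an element ξ ∈ K^× of quantum characteristic e (that is, [e]_ξ = 0 and [k]_ξ ≠ 0 for 1 ≤ k < e), let κ ∈ Z^ℓ be a multicharge with κ_l − κ_{l+1} ≥ n for 1 ≤ l < ℓ, and set Λ = Σ_{l=1}^ℓ Λ_{κ_l mod e}. Then in the cyclotomic quiver Hecke algebra R_n^Λ(K) one has y_r^ℓ = 0 for every 1 ≤ r ≤ n, where ℓ is the level (the number of entries of κ). (The paper proves this for e = 0 or e > n; the e = 0 case reduces to the case e > n.) -/

import Mathlib

open scoped BigOperators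
open scoped Classical

namespace Paper

/-! ## Quantum integers -/

/-- The quantum integer `[d]_x` in a field, for `d ∈ ℤ`. -/
noncomputable def qint {K : Type*} [Field K] (x : K) (d : ℤ) : K :=
  if 0 ≤ d then ∑ k ∈ Finset.range d.toNat, x ^ k
  else -∑ k ∈ Finset.range (-d).toNat, x ^ (-((k : ℤ) + 1))

/-- The quantum integer `[d]_t` in a commutative ring, for an invertible `t` and `d ∈ ℤ`. -/
def qintU {O : Type*} [CommRing O] (t : Oˣ) (d : ℤ) : O :=
  if 0 ≤ d then ∑ k ∈ Finset.range d.toNat, (t : O) ^ k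
  else -∑ k ∈ Finset.range (-d).toNat, ((t ^ (-((k : ℤ) + 1)) : Oˣ) : O)

/-! ## Nodes, multipartitions and standard tableaux -/

/-- A node `(l, r, c)`: component `l`, row `r`, column `c` (all `0`-based). -/
abbrev Node : Type := ℕ × ℕ × ℕ

/-- `nodeBelow A B` holds when `B` is strictly below `A`, i.e. `A < B` lexicographically. -/
def nodeBelow (A B : Node) : Prop :=
  A.1 < B.1 ∨ (A.1 = B.1 ∧ (A.2.1 < B.2.1 ∨ (A.2.1 = B.2.1 ∧ A.2.2 < B.2.2)))

/-- An `ℓ`-multipartition of `n`. -/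
structure Multipartition (ℓ n : ℕ) : Type where
  part : ℕ → ℕ → ℕ
  comp_bound : ∀ l, ℓ ≤ l → ∀ r, part l r = 0
  antitone : ∀ l, Antitone (part l)
  row_bound : ∀ l r, n ≤ r → part l r = 0
  size : (∑ l ∈ Finset.range ℓ, ∑ r ∈ Finset.range n, part l r) = n

/-- The diagram of a multipartition. -/
def Multipartition.diagram {ℓ n : ℕ} (μ : Multipartition ℓ n) : Set Node :=
  {A | A.2.2 < μ.part A.1 A.2.1}

/-- A standard tableau: a bijection from the diagram of its shape onto `{1, …, n}`
that increases along rows and down columns of each component (it takes the value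
`0` off the diagram, so that it is determined by its entries). -/
structure StdTableau (ℓ n : ℕ) : Type where
  shape : Multipartition ℓ n
  entry : Node → ℕ
  entry_zero : ∀ A, A ∉ shape.diagram → entry A = 0
  bijOn : Set.BijOn entry shape.diagram (Set.Icc 1 n)
  row_inc : ∀ l r c, (l, r, c + 1) ∈ shape.diagram → entry (l, r, c) < entry (l, r, c + 1)
  col_inc : ∀ l r c, (l, r + 1, c) ∈ shape.diagram → entry (l, r, c) < entry (l, r + 1, c)

/-- The node of a standard tableau containing the entry `k`. -/
noncomputable def StdTableau.node {ℓ n : ℕ} (T : StdTableau ℓ n) (k : ℕ) : Node :=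
  Function.invFunOn T.entry T.shape.diagram k

/-- The content `c_k(T) = κ_l + c - r` of the entry `k` in the tableau `T`
(`1 ≤ k ≤ n`). -/
noncomputable def content {ℓ n : ℕ} (κ : ℕ → ℤ) (T : StdTableau ℓ n) (k : ℕ) : ℤ :=
  κ (T.node k).1 + ((T.node k).2.2 : ℤ) - ((T.node k).2.1 : ℤ)

/-- The residue sequence of a standard tableau, in `I^n` with `I = ℤ/eℤ`. -/
noncomputable def resSeq {ℓ n : ℕ} (e : ℕ) (κ : ℕ → ℤ) (T : StdTableau ℓ n) :
    Fin n → ZMod e :=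
  fun k => ((content κ T (k.1 + 1) : ℤ) : ZMod e)

/-- The residue of a node. -/
def resNode (e : ℕ) (κ : ℕ → ℤ) (A : Node) : ZMod e :=
  ((κ A.1 + (A.2.2 : ℤ) - (A.2.1 : ℤ) : ℤ) : ZMod e)

/-- A set of nodes is the diagram of a multipartition (with at most `ℓ` components)
iff it is finite and downward closed in rows and columns. -/
def IsDiagramSet (ℓ : ℕ) (S : Set Node) : Prop :=
  S.Finite ∧ (∀ A ∈ S, A.1 < ℓ) ∧
    (∀ l r c, (l, r, c + 1) ∈ S → (l, r, c) ∈ S) ∧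
    (∀ l r c, (l, r + 1, c) ∈ S → (l, r, c) ∈ S)

/-- `A` is an addable node of the diagram `S`. -/
def Addable (ℓ : ℕ) (S : Set Node) (A : Node) : Prop :=
  A ∉ S ∧ IsDiagramSet ℓ (S ∪ {A})

/-- `A` is a removable node of the diagram `S`. -/
def Removable (ℓ : ℕ) (S : Set Node) (A : Node) : Prop :=
  A ∈ S ∧ IsDiagramSet ℓ (S \ {A})

/-- `d_A(S)`: the number of addable nodes of `S` of the same residue as `A` strictly
below `A`, minus the number of removable ones. -/
noncomputable def dNode (ℓ e : ℕ) (κ : ℕ → ℤ) (S : Set Node) (A : Node) : ℤ :=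
  (Set.ncard {B | Addable ℓ S B ∧ resNode e κ B = resNode e κ A ∧ nodeBelow A B} : ℤ) -
    (Set.ncard {B | Removable ℓ S B ∧ resNode e κ B = resNode e κ A ∧ nodeBelow A B} : ℤ)

/-- The Brundan–Kleshchev–Wang degree `deg_e(T)` of a standard tableau, written as the
telescoping sum of the recursion `deg_e(T) = deg_e(T↓(n-1)) + d_A(Shape(T))`. -/
noncomputable def degE {ℓ n : ℕ} (e : ℕ) (κ : ℕ → ℤ) (T : StdTableau ℓ n) : ℤ :=
  ∑ m ∈ Finset.Icc 1 n,
    dNode ℓ e κ {A | A ∈ T.shape.diagram ∧ T.entry A ≤ m} (T.node m)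

/-- The restriction of the diagram of `T` to entries `≤ m` (the diagram of `Shape(T↓m)`). -/
def restDiag {ℓ n : ℕ} (T : StdTableau ℓ n) (m : ℕ) : Set Node :=
  {A | A ∈ T.shape.diagram ∧ T.entry A ≤ m}

/-- Dominance order on standard tableaux: `domTab S T` iff `S ⊵ T`. -/
def domTab {ℓ n : ℕ} (S T : StdTableau ℓ n) : Prop :=
  ∀ m l i : ℕ,
    Set.ncard {A | A ∈ restDiag T m ∧ (A.1 < l ∨ (A.1 = l ∧ A.2.1 ≤ i))} ≤
      Set.ncard {A | A ∈ restDiag S m ∧ (A.1 < l ∨ (A.1 = l ∧ A.2.1 ≤ i))}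

/-- Interchange the entries `r` and `r + 1` in an entry function. -/
def swapEntry (f : Node → ℕ) (r : ℕ) : Node → ℕ :=
  fun A => if f A = r then r + 1 else if f A = r + 1 then r else f A

/-- `ρ_r(T) = c_r(T) - c_{r+1}(T)`, the axial distance. -/
noncomputable def rhoTab {ℓ n : ℕ} (κ : ℕ → ℤ) (T : StdTableau ℓ n) (r : ℕ) : ℤ :=
  content κ T r - content κ T (r + 1)

/-- The entry function of the row-reading initial tableau `t^λ`. -/
noncomputable def tlamEntry {ℓ n : ℕ} (μ : Multipartition ℓ n) (A : Node) : ℕ :=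
  if A ∈ μ.diagram then
    (∑ l ∈ Finset.range A.1, ∑ r ∈ Finset.range n, μ.part l r) +
      (∑ r ∈ Finset.range A.2.1, μ.part A.1 r) + A.2.2 + 1
  else 0

/-- The finite set of possible contents of standard tableaux of size `n`. -/
noncomputable def contFinset (ℓ n : ℕ) (κ : ℕ → ℤ) : Finset ℤ :=
  ((Finset.range ℓ ×ˢ Finset.range n ×ˢ Finset.range n).image
      (fun x => κ x.1 + (x.2.2 : ℤ) - (x.2.1 : ℤ))).filter
    (fun c => ∃ T : StdTableau ℓ n, ∃ k, 1 ≤ k ∧ k ≤ n ∧ content κ T k = c)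

/-- The standard tableau (if any) obtained from `T` by interchanging the entries
`r` and `r + 1`; i.e. `T·s_r` if it is standard, and `none` otherwise. -/
noncomputable def oSwapO {ℓ n : ℕ} (T : StdTableau ℓ n) (r : ℕ) :
    Option (StdTableau ℓ n) :=
  if h : ∃ V : StdTableau ℓ n, V.entry = swapEntry T.entry r then some (Classical.choose h)
  else none

/-- `oSwap` extended to `Option`. -/
noncomputable def oSwap {ℓ n : ℕ} (X : Option (StdTableau ℓ n)) (r : ℕ) :
    Option (StdTableau ℓ n) :=
  X.bind fun T => oSwapO T r

/-- Evaluate a seminormal coefficient system on an optional tableau (by `0` if none). -/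
noncomputable def aE {ℓ n : ℕ} {K : Type*} [Field K] (α : ℕ → StdTableau ℓ n → K) (r : ℕ)
    (X : Option (StdTableau ℓ n)) : K :=
  X.elim 0 (α r)

/-! ## Separation and idempotent subrings -/

/-- `(K, t)` separates `Std(P_n)` (field version):
`[n]!_t ∏_{1 ≤ l < m ≤ ℓ} ∏_{-n < d < n} [κ_l - κ_m + d]_t ≠ 0`. -/
def SeparatesF {K : Type*} [Field K] (t : Kˣ) (n ℓ : ℕ) (κ : ℕ → ℤ) : Prop :=
  ((∏ d ∈ Finset.Icc 1 n, qint (t : K) (d : ℤ)) *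
      ∏ l ∈ Finset.range ℓ, ∏ m ∈ Finset.Ioo l ℓ,
        ∏ d ∈ Finset.Ioo (-(n : ℤ)) (n : ℤ), qint (t : K) (κ l - κ m + d)) ≠ 0

/-- `(O, t)` separates `Std(P_n)` (subring version): the separation element is a unit. -/
def SeparatesU {O : Type*} [CommRing O] (t : Oˣ) (n ℓ : ℕ) (κ : ℕ → ℤ) : Prop :=
  IsUnit ((∏ d ∈ Finset.Icc 1 n, qintU t (d : ℤ)) *
      ∏ l ∈ Finset.range ℓ, ∏ m ∈ Finset.Ioo l ℓ,
        ∏ d ∈ Finset.Ioo (-(n : ℤ)) (n : ℤ), qintU t (κ l - κ m + d))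

/-- `(O, t)` is an `e`-idempotent subring of the field `K`. -/
def IsIdempotentSubring {K : Type*} [Field K] (O : Subring K) (t : Oˣ) (e n ℓ : ℕ)
    (κ : ℕ → ℤ) : Prop :=
  SeparatesU t n ℓ κ ∧
    (∀ k : ℤ, ¬(e : ℤ) ∣ k → IsUnit (qintU t k)) ∧
    (∀ k : ℤ, (e : ℤ) ∣ k → qintU t k ∈ Ideal.jacobson (⊥ : Ideal O))

/-! ## The cyclotomic Hecke algebra, by generators and relations -/

/-- Generators `L_1, …, L_n`, `T_1, …, T_{n-1}` (here `0`-based). -/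
inductive HeckeGen (n : ℕ) : Type
  | L : Fin n → HeckeGen n
  | T : Fin (n - 1) → HeckeGen n

/-- The position `r` of the pair `(r, r+1)` interchanged by the `r`-th transposition. -/
def pL {n : ℕ} (r : Fin (n - 1)) : Fin n := ⟨r.1, by have := r.2; omega⟩

/-- The position `r + 1` of the pair interchanged by the `r`-th transposition. -/
def pR {n : ℕ} (r : Fin (n - 1)) : Fin n := ⟨r.1 + 1, by have := r.2; omega⟩

/-- The position `r + 2`, used in braid relations. -/
def pM {n : ℕ} (r : Fin (n - 1)) (hr : r.1 + 1 < n - 1) : Fin n := ⟨r.1 + 2, by omega⟩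

/-- The free algebra generator `L_k`. -/
def hL (R : Type*) [CommRing R] {n : ℕ} (k : Fin n) : FreeAlgebra R (HeckeGen n) :=
  FreeAlgebra.ι R (HeckeGen.L k)

/-- The free algebra generator `T_r`. -/
def hT (R : Type*) [CommRing R] {n : ℕ} (r : Fin (n - 1)) : FreeAlgebra R (HeckeGen n) :=
  FreeAlgebra.ι R (HeckeGen.T r)

/-- The defining relations of the integral cyclotomic Hecke algebra `H_n(R, t, κ)`. -/
inductive HeckeRel (R : Type*) [CommRing R] (t : Rˣ) (n ℓ : ℕ) (κ : ℕ → ℤ) :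
    FreeAlgebra R (HeckeGen n) → FreeAlgebra R (HeckeGen n) → Prop
  | cyc (h : 0 < n) :
      HeckeRel R t n ℓ κ
        (((List.range ℓ).map fun l =>
          hL R (⟨0, h⟩ : Fin n) - algebraMap R _ (qintU t (κ l))).prod) 0
  | quad (r : Fin (n - 1)) :
      HeckeRel R t n ℓ κ ((hT R r + 1) * (hT R r - algebraMap R _ (t : R))) 0
  | LL (k m : Fin n) : HeckeRel R t n ℓ κ (hL R k * hL R m) (hL R m * hL R k)
  | TTfar (r s : Fin (n - 1)) (h : r.1 + 1 < s.1 ∨ s.1 + 1 < r.1) :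
      HeckeRel R t n ℓ κ (hT R r * hT R s) (hT R s * hT R r)
  | braid (r s : Fin (n - 1)) (h : s.1 = r.1 + 1) :
      HeckeRel R t n ℓ κ (hT R r * hT R s * hT R r) (hT R s * hT R r * hT R s)
  | TL (r : Fin (n - 1)) (k : Fin n) (h : k.1 ≠ r.1 ∧ k.1 ≠ r.1 + 1) :
      HeckeRel R t n ℓ κ (hT R r * hL R k) (hL R k * hT R r)
  | LT (r : Fin (n - 1)) :
      HeckeRel R t n ℓ κ (hL R (pR r) * (hT R r - algebraMap R _ (t : R) + 1))
        (hT R r * hL R (pL r) + 1)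

/-- The integral cyclotomic Hecke algebra of type `A`, `H_n(R, t, κ)`. -/
noncomputable abbrev CycHecke (R : Type*) [CommRing R] (t : Rˣ) (n ℓ : ℕ) (κ : ℕ → ℤ) :
    Type _ :=
  RingQuot (HeckeRel R t n ℓ κ)

/-- The generator `L_k` of the cyclotomic Hecke algebra. -/
noncomputable def Lgen (R : Type*) [CommRing R] (t : Rˣ) (n ℓ : ℕ) (κ : ℕ → ℤ)
    (k : Fin n) : CycHecke R t n ℓ κ :=
  RingQuot.mkAlgHom R (HeckeRel R t n ℓ κ) (hL R k)

/-- The generator `T_r` of the cyclotomic Hecke algebra. -/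
noncomputable def Tgen (R : Type*) [CommRing R] (t : Rˣ) (n ℓ : ℕ) (κ : ℕ → ℤ)
    (r : Fin (n - 1)) : CycHecke R t n ℓ κ :=
  RingQuot.mkAlgHom R (HeckeRel R t n ℓ κ) (hT R r)

end Paper
/-! ## Quiver Hecke (KLR) algebras, by generators and relations -/

namespace Paper

/-- Generators `e(i)` (`i ∈ I^n`), `ψ_1, …, ψ_{n-1}`, `y_1, …, y_n` (here `0`-based). -/
inductive KLRGen (n e : ℕ) : Type
  | idem : (Fin n → ZMod e) → KLRGen n e
  | psi : Fin (n - 1) → KLRGen n e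
  | y : Fin n → KLRGen n e

/-- The free algebra generator `e(i)`. -/
def kE (R : Type*) [CommRing R] {n e : ℕ} (i : Fin n → ZMod e) :
    FreeAlgebra R (KLRGen n e) :=
  FreeAlgebra.ι R (KLRGen.idem i)

/-- The free algebra generator `ψ_r`. -/
def kPsi (R : Type*) [CommRing R] {n e : ℕ} (r : Fin (n - 1)) :
    FreeAlgebra R (KLRGen n e) :=
  FreeAlgebra.ι R (KLRGen.psi r)

/-- The free algebra generator `y_k`. -/
def kY (R : Type*) [CommRing R] {n e : ℕ} (k : Fin n) : FreeAlgebra R (KLRGen n e) :=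
  FreeAlgebra.ι R (KLRGen.y k)

/-- `s_r · i`: interchange the entries of `i` at positions `r` and `r + 1`. -/
def swapSeq {n e : ℕ} (i : Fin n → ZMod e) (r : Fin (n - 1)) : Fin n → ZMod e :=
  fun k => if k = pL r then i (pR r) else if k = pR r then i (pL r) else i k

/-- The defining relations of the cyclotomic quiver Hecke algebra `R_n^Λ(R)` where
`Λ = Σ_l Λ_{κ_l mod e}`. -/
inductive KLRRel (R : Type*) [CommRing R] (n e ℓ : ℕ) [NeZero e] (κ : ℕ → ℤ) :
    FreeAlgebra R (KLRGen n e) → FreeAlgebra R (KLRGen n e) → Prop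
  | cyc (h : 0 < n) (i : Fin n → ZMod e) :
      KLRRel R n e ℓ κ
        ((kY R (⟨0, h⟩ : Fin n)) ^
            (((Finset.range ℓ).filter fun l => ((κ l : ZMod e) = i ⟨0, h⟩)).card) *
          kE R i) 0
  | orth (i j : Fin n → ZMod e) (h : i ≠ j) : KLRRel R n e ℓ κ (kE R i * kE R j) 0
  | idem (i : Fin n → ZMod e) : KLRRel R n e ℓ κ (kE R i * kE R i) (kE R i)
  | complete : KLRRel R n e ℓ κ (∑ i : Fin n → ZMod e, kE R i) 1
  | yE (k : Fin n) (i : Fin n → ZMod e) :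
      KLRRel R n e ℓ κ (kY R k * kE R i) (kE R i * kY R k)
  | psiE (r : Fin (n - 1)) (i : Fin n → ZMod e) :
      KLRRel R n e ℓ κ (kPsi R r * kE R i) (kE R (swapSeq i r) * kPsi R r)
  | yy (k m : Fin n) : KLRRel R n e ℓ κ (kY R k * kY R m) (kY R m * kY R k)
  | psiyEq (r : Fin (n - 1)) (i : Fin n → ZMod e) (h : i (pL r) = i (pR r)) :
      KLRRel R n e ℓ κ (kPsi R r * kY R (pR r) * kE R i)
        ((kY R (pL r) * kPsi R r + 1) * kE R i)
  | psiyNe (r : Fin (n - 1)) (i : Fin n → ZMod e) (h : i (pL r) ≠ i (pR r)) :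
      KLRRel R n e ℓ κ (kPsi R r * kY R (pR r) * kE R i)
        (kY R (pL r) * kPsi R r * kE R i)
  | ypsiEq (r : Fin (n - 1)) (i : Fin n → ZMod e) (h : i (pL r) = i (pR r)) :
      KLRRel R n e ℓ κ (kY R (pR r) * kPsi R r * kE R i)
        ((kPsi R r * kY R (pL r) + 1) * kE R i)
  | ypsiNe (r : Fin (n - 1)) (i : Fin n → ZMod e) (h : i (pL r) ≠ i (pR r)) :
      KLRRel R n e ℓ κ (kY R (pR r) * kPsi R r * kE R i)
        (kPsi R r * kY R (pL r) * kE R i)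
  | psiyFar (r : Fin (n - 1)) (k : Fin n) (h : k.1 ≠ r.1 ∧ k.1 ≠ r.1 + 1) :
      KLRRel R n e ℓ κ (kPsi R r * kY R k) (kY R k * kPsi R r)
  | psipsiFar (r s : Fin (n - 1)) (h : r.1 + 1 < s.1 ∨ s.1 + 1 < r.1) :
      KLRRel R n e ℓ κ (kPsi R r * kPsi R s) (kPsi R s * kPsi R r)
  | quadEq (r : Fin (n - 1)) (i : Fin n → ZMod e) (h : i (pL r) = i (pR r)) :
      KLRRel R n e ℓ κ (kPsi R r ^ 2 * kE R i) 0
  | quadR (r : Fin (n - 1)) (i : Fin n → ZMod e)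
      (h1 : i (pR r) = i (pL r) + 1) (h2 : i (pL r) ≠ i (pR r) + 1) :
      KLRRel R n e ℓ κ (kPsi R r ^ 2 * kE R i) ((kY R (pL r) - kY R (pR r)) * kE R i)
  | quadL (r : Fin (n - 1)) (i : Fin n → ZMod e)
      (h1 : i (pL r) = i (pR r) + 1) (h2 : i (pR r) ≠ i (pL r) + 1) :
      KLRRel R n e ℓ κ (kPsi R r ^ 2 * kE R i) ((kY R (pR r) - kY R (pL r)) * kE R i)
  | quadBoth (r : Fin (n - 1)) (i : Fin n → ZMod e)
      (h1 : i (pR r) = i (pL r) + 1) (h2 : i (pL r) = i (pR r) + 1) :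
      KLRRel R n e ℓ κ (kPsi R r ^ 2 * kE R i)
        ((kY R (pR r) - kY R (pL r)) * (kY R (pL r) - kY R (pR r)) * kE R i)
  | quadNone (r : Fin (n - 1)) (i : Fin n → ZMod e) (h1 : i (pL r) ≠ i (pR r))
      (h2 : i (pR r) ≠ i (pL r) + 1) (h3 : i (pL r) ≠ i (pR r) + 1) :
      KLRRel R n e ℓ κ (kPsi R r ^ 2 * kE R i) (kE R i)
  | braidR (r : Fin (n - 1)) (hr : r.1 + 1 < n - 1) (i : Fin n → ZMod e)
      (h0 : i (pM r hr) = i (pL r)) (h1 : i (pR r) = i (pL r) + 1)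
      (h2 : i (pL r) ≠ i (pR r) + 1) :
      KLRRel R n e ℓ κ (kPsi R r * kPsi R ⟨r.1 + 1, hr⟩ * kPsi R r * kE R i)
        ((kPsi R ⟨r.1 + 1, hr⟩ * kPsi R r * kPsi R ⟨r.1 + 1, hr⟩ - 1) * kE R i)
  | braidL (r : Fin (n - 1)) (hr : r.1 + 1 < n - 1) (i : Fin n → ZMod e)
      (h0 : i (pM r hr) = i (pL r)) (h1 : i (pL r) = i (pR r) + 1)
      (h2 : i (pR r) ≠ i (pL r) + 1) :
      KLRRel R n e ℓ κ (kPsi R r * kPsi R ⟨r.1 + 1, hr⟩ * kPsi R r * kE R i)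
        ((kPsi R ⟨r.1 + 1, hr⟩ * kPsi R r * kPsi R ⟨r.1 + 1, hr⟩ + 1) * kE R i)
  | braidBoth (r : Fin (n - 1)) (hr : r.1 + 1 < n - 1) (i : Fin n → ZMod e)
      (h0 : i (pM r hr) = i (pL r)) (h1 : i (pR r) = i (pL r) + 1)
      (h2 : i (pL r) = i (pR r) + 1) :
      KLRRel R n e ℓ κ (kPsi R r * kPsi R ⟨r.1 + 1, hr⟩ * kPsi R r * kE R i)
        ((kPsi R ⟨r.1 + 1, hr⟩ * kPsi R r * kPsi R ⟨r.1 + 1, hr⟩ +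
            kY R (pL r) - 2 * kY R (pR r) + kY R (pM r hr)) * kE R i)
  | braidNone (r : Fin (n - 1)) (hr : r.1 + 1 < n - 1) (i : Fin n → ZMod e)
      (h : ¬(i (pM r hr) = i (pL r) ∧
        (i (pR r) = i (pL r) + 1 ∨ i (pL r) = i (pR r) + 1))) :
      KLRRel R n e ℓ κ (kPsi R r * kPsi R ⟨r.1 + 1, hr⟩ * kPsi R r * kE R i)
        (kPsi R ⟨r.1 + 1, hr⟩ * kPsi R r * kPsi R ⟨r.1 + 1, hr⟩ * kE R i)

/-- The cyclotomic quiver Hecke algebra `R_n^Λ(R)`, `Λ = Σ_l Λ_{κ_l mod e}`. -/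
noncomputable abbrev KLR (R : Type*) [CommRing R] (n e ℓ : ℕ) [NeZero e] (κ : ℕ → ℤ) :
    Type _ :=
  RingQuot (KLRRel R n e ℓ κ)

/-- The generator `e(i)` of the cyclotomic quiver Hecke algebra. -/
noncomputable def KeGen (R : Type*) [CommRing R] (n e ℓ : ℕ) [NeZero e] (κ : ℕ → ℤ)
    (i : Fin n → ZMod e) : KLR R n e ℓ κ :=
  RingQuot.mkAlgHom R (KLRRel R n e ℓ κ) (kE R i)

/-- The generator `ψ_r` of the cyclotomic quiver Hecke algebra. -/
noncomputable def KpsiGen (R : Type*) [CommRing R] (n e ℓ : ℕ) [NeZero e] (κ : ℕ → ℤ)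
    (r : Fin (n - 1)) : KLR R n e ℓ κ :=
  RingQuot.mkAlgHom R (KLRRel R n e ℓ κ) (kPsi R r)

/-- The generator `y_k` of the cyclotomic quiver Hecke algebra. -/
noncomputable def KyGen (R : Type*) [CommRing R] (n e ℓ : ℕ) [NeZero e] (κ : ℕ → ℤ)
    (k : Fin n) : KLR R n e ℓ κ :=
  RingQuot.mkAlgHom R (KLRRel R n e ℓ κ) (kY R k)

end Paper
/-! ## The deformed cyclotomic quiver Hecke algebra -/

namespace Paper

/-- `y_k^⟨d⟩ = t^d y_k + [d]_t` in the free algebra. -/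
def ydot (R : Type*) [CommRing R] (t : Rˣ) {n e : ℕ} (d : ℤ) (k : Fin n) :
    FreeAlgebra R (KLRGen n e) :=
  algebraMap R _ ((t ^ d : Rˣ) : R) * kY R k + algebraMap R _ (qintU t d)

/-- `ρ_r(i) = î_r - î_{r+1}` for `i ∈ I^n`. -/
def rhoI {n e : ℕ} (i : Fin n → ZMod e) (r : Fin (n - 1)) : ℤ :=
  ((i (pL r)).val : ℤ) - ((i (pR r)).val : ℤ)

/-- The defining relations of the deformed cyclotomic quiver Hecke algebra `R_n(O)`. -/
inductive DefKLRRel (R : Type*) [CommRing R] (t : Rˣ) (n e ℓ : ℕ) [NeZero e] (κ : ℕ → ℤ) :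
    FreeAlgebra R (KLRGen n e) → FreeAlgebra R (KLRGen n e) → Prop
  | cyc (h : 0 < n) (i : Fin n → ZMod e) :
      DefKLRRel R t n e ℓ κ
        ((((List.range ℓ).map fun l =>
            if ((κ l : ZMod e) = i ⟨0, h⟩) then
              kY R (⟨0, h⟩ : Fin n) -
                algebraMap R _ (qintU t (κ l - ((i ⟨0, h⟩).val : ℤ)))
            else 1).prod) * kE R i) 0
  | orth (i j : Fin n → ZMod e) (h : i ≠ j) : DefKLRRel R t n e ℓ κ (kE R i * kE R j) 0
  | idem (i : Fin n → ZMod e) : DefKLRRel R t n e ℓ κ (kE R i * kE R i) (kE R i)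
  | complete : DefKLRRel R t n e ℓ κ (∑ i : Fin n → ZMod e, kE R i) 1
  | yE (k : Fin n) (i : Fin n → ZMod e) :
      DefKLRRel R t n e ℓ κ (kY R k * kE R i) (kE R i * kY R k)
  | psiE (r : Fin (n - 1)) (i : Fin n → ZMod e) :
      DefKLRRel R t n e ℓ κ (kPsi R r * kE R i) (kE R (swapSeq i r) * kPsi R r)
  | yy (k m : Fin n) : DefKLRRel R t n e ℓ κ (kY R k * kY R m) (kY R m * kY R k)
  | psiyEq (r : Fin (n - 1)) (i : Fin n → ZMod e) (h : i (pL r) = i (pR r)) :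
      DefKLRRel R t n e ℓ κ (kPsi R r * kY R (pR r) * kE R i)
        ((kY R (pL r) * kPsi R r + 1) * kE R i)
  | psiyNe (r : Fin (n - 1)) (i : Fin n → ZMod e) (h : i (pL r) ≠ i (pR r)) :
      DefKLRRel R t n e ℓ κ (kPsi R r * kY R (pR r) * kE R i)
        (kY R (pL r) * kPsi R r * kE R i)
  | ypsiEq (r : Fin (n - 1)) (i : Fin n → ZMod e) (h : i (pL r) = i (pR r)) :
      DefKLRRel R t n e ℓ κ (kY R (pR r) * kPsi R r * kE R i)
        ((kPsi R r * kY R (pL r) + 1) * kE R i)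
  | ypsiNe (r : Fin (n - 1)) (i : Fin n → ZMod e) (h : i (pL r) ≠ i (pR r)) :
      DefKLRRel R t n e ℓ κ (kY R (pR r) * kPsi R r * kE R i)
        (kPsi R r * kY R (pL r) * kE R i)
  | psiyFar (r : Fin (n - 1)) (k : Fin n) (h : k.1 ≠ r.1 ∧ k.1 ≠ r.1 + 1) :
      DefKLRRel R t n e ℓ κ (kPsi R r * kY R k) (kY R k * kPsi R r)
  | psipsiFar (r s : Fin (n - 1)) (h : r.1 + 1 < s.1 ∨ s.1 + 1 < r.1) :
      DefKLRRel R t n e ℓ κ (kPsi R r * kPsi R s) (kPsi R s * kPsi R r)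
  | quadEq (r : Fin (n - 1)) (i : Fin n → ZMod e) (h : i (pL r) = i (pR r)) :
      DefKLRRel R t n e ℓ κ (kPsi R r ^ 2 * kE R i) 0
  | quadR (r : Fin (n - 1)) (i : Fin n → ZMod e)
      (h1 : i (pR r) = i (pL r) + 1) (h2 : i (pL r) ≠ i (pR r) + 1) :
      DefKLRRel R t n e ℓ κ (kPsi R r ^ 2 * kE R i)
        ((ydot R t (1 + rhoI i r) (pL r) - kY R (pR r)) * kE R i)
  | quadL (r : Fin (n - 1)) (i : Fin n → ZMod e)
      (h1 : i (pL r) = i (pR r) + 1) (h2 : i (pR r) ≠ i (pL r) + 1) :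
      DefKLRRel R t n e ℓ κ (kPsi R r ^ 2 * kE R i)
        ((ydot R t (1 - rhoI i r) (pR r) - kY R (pL r)) * kE R i)
  | quadBoth (r : Fin (n - 1)) (i : Fin n → ZMod e)
      (h1 : i (pR r) = i (pL r) + 1) (h2 : i (pL r) = i (pR r) + 1) :
      DefKLRRel R t n e ℓ κ (kPsi R r ^ 2 * kE R i)
        ((ydot R t (1 + rhoI i r) (pL r) - kY R (pR r)) *
          (ydot R t (1 - rhoI i r) (pR r) - kY R (pL r)) * kE R i)
  | quadNone (r : Fin (n - 1)) (i : Fin n → ZMod e) (h1 : i (pL r) ≠ i (pR r))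
      (h2 : i (pR r) ≠ i (pL r) + 1) (h3 : i (pL r) ≠ i (pR r) + 1) :
      DefKLRRel R t n e ℓ κ (kPsi R r ^ 2 * kE R i) (kE R i)
  | braidBoth (r : Fin (n - 1)) (hr : r.1 + 1 < n - 1) (i : Fin n → ZMod e)
      (h0 : i (pM r hr) = i (pL r)) (h1 : i (pR r) = i (pL r) + 1)
      (h2 : i (pL r) = i (pR r) + 1) :
      DefKLRRel R t n e ℓ κ
        ((kPsi R r * kPsi R ⟨r.1 + 1, hr⟩ * kPsi R r -
            kPsi R ⟨r.1 + 1, hr⟩ * kPsi R r * kPsi R ⟨r.1 + 1, hr⟩) * kE R i)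
        ((ydot R t (1 + rhoI i r) (pL r) + ydot R t (1 + rhoI i r) (pM r hr) -
            ydot R t (1 + rhoI i r) (pR r) - ydot R t (1 - rhoI i r) (pR r)) * kE R i)
  | braidR (r : Fin (n - 1)) (hr : r.1 + 1 < n - 1) (i : Fin n → ZMod e)
      (h0 : i (pM r hr) = i (pL r)) (h1 : i (pR r) = i (pL r) + 1)
      (h2 : i (pL r) ≠ i (pR r) + 1) :
      DefKLRRel R t n e ℓ κ
        ((kPsi R r * kPsi R ⟨r.1 + 1, hr⟩ * kPsi R r -
            kPsi R ⟨r.1 + 1, hr⟩ * kPsi R r * kPsi R ⟨r.1 + 1, hr⟩) * kE R i)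
        (algebraMap R _ (-(((t ^ (1 + rhoI i r) : Rˣ) : R))) * kE R i)
  | braidL (r : Fin (n - 1)) (hr : r.1 + 1 < n - 1) (i : Fin n → ZMod e)
      (h0 : i (pM r hr) = i (pL r)) (h1 : i (pL r) = i (pR r) + 1)
      (h2 : i (pR r) ≠ i (pL r) + 1) :
      DefKLRRel R t n e ℓ κ
        ((kPsi R r * kPsi R ⟨r.1 + 1, hr⟩ * kPsi R r -
            kPsi R ⟨r.1 + 1, hr⟩ * kPsi R r * kPsi R ⟨r.1 + 1, hr⟩) * kE R i)
        (kE R i)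
  | braidNone (r : Fin (n - 1)) (hr : r.1 + 1 < n - 1) (i : Fin n → ZMod e)
      (h : ¬(i (pM r hr) = i (pL r) ∧
        (i (pR r) = i (pL r) + 1 ∨ i (pL r) = i (pR r) + 1))) :
      DefKLRRel R t n e ℓ κ
        ((kPsi R r * kPsi R ⟨r.1 + 1, hr⟩ * kPsi R r -
            kPsi R ⟨r.1 + 1, hr⟩ * kPsi R r * kPsi R ⟨r.1 + 1, hr⟩) * kE R i) 0

/-- The deformed cyclotomic quiver Hecke algebra `R_n(R)`. -/
noncomputable abbrev DefKLR (R : Type*) [CommRing R] (t : Rˣ) (n e ℓ : ℕ) [NeZero e]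
    (κ : ℕ → ℤ) : Type _ :=
  RingQuot (DefKLRRel R t n e ℓ κ)

/-- The generator `f_i` of the deformed cyclotomic quiver Hecke algebra. -/
noncomputable def DfGen (R : Type*) [CommRing R] (t : Rˣ) (n e ℓ : ℕ) [NeZero e]
    (κ : ℕ → ℤ) (i : Fin n → ZMod e) : DefKLR R t n e ℓ κ :=
  RingQuot.mkAlgHom R (DefKLRRel R t n e ℓ κ) (kE R i)

/-- The generator `ψ_r` of the deformed cyclotomic quiver Hecke algebra. -/
noncomputable def DpsiGen (R : Type*) [CommRing R] (t : Rˣ) (n e ℓ : ℕ) [NeZero e]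
    (κ : ℕ → ℤ) (r : Fin (n - 1)) : DefKLR R t n e ℓ κ :=
  RingQuot.mkAlgHom R (DefKLRRel R t n e ℓ κ) (kPsi R r)

/-- The generator `y_k` of the deformed cyclotomic quiver Hecke algebra. -/
noncomputable def DyGen (R : Type*) [CommRing R] (t : Rˣ) (n e ℓ : ℕ) [NeZero e]
    (κ : ℕ → ℤ) (k : Fin n) : DefKLR R t n e ℓ κ :=
  RingQuot.mkAlgHom R (DefKLRRel R t n e ℓ κ) (kY R k)

/-! ## Seminormal idempotents -/

/-- The seminormal idempotent `F_T` of the semisimple cyclotomic Hecke algebra: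
`F_T = ∏_{k=1}^n ∏_{c ∈ Cont(n), [c_k(T)] ≠ [c]} (L_k - [c]) / ([c_k(T)] - [c])`. -/
noncomputable def Fidem (K : Type*) [Field K] (tK : Kˣ) (n ℓ : ℕ) (κ : ℕ → ℤ)
    (T : StdTableau ℓ n) : CycHecke K tK n ℓ κ :=
  ((List.finRange n).map (fun k =>
    (((contFinset ℓ n κ).sort (· ≤ ·)).map (fun c =>
      if qint (tK : K) (content κ T (k.1 + 1)) ≠ qint (tK : K) c then
        (Lgen K tK n ℓ κ k - algebraMap K _ (qint (tK : K) c)) *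
          algebraMap K _ ((qint (tK : K) (content κ T (k.1 + 1)) - qint (tK : K) c)⁻¹)
      else 1)).prod)).prod

/-- The residue idempotent `f_i = Σ_{T ∈ Std(i)} F_T`. -/
noncomputable def fres (K : Type*) [Field K] (tK : Kˣ) (n ℓ e : ℕ) (κ : ℕ → ℤ)
    (i : Fin n → ZMod e) : CycHecke K tK n ℓ κ :=
  ∑ᶠ T : {T : StdTableau ℓ n // resSeq e κ T = i}, Fidem K tK n ℓ κ T.1

/-- The simultaneous two-sided eigenspace `H_{S,T}` of the Jucys–Murphy elements. -/
noncomputable def eigSub (K : Type*) [Field K] (tK : Kˣ) (n ℓ : ℕ) (κ : ℕ → ℤ)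
    (S T : StdTableau ℓ n) : Submodule K (CycHecke K tK n ℓ κ) where
  carrier := {h | ∀ k : Fin n,
      Lgen K tK n ℓ κ k * h = qint (tK : K) (content κ S (k.1 + 1)) • h ∧
      h * Lgen K tK n ℓ κ k = qint (tK : K) (content κ T (k.1 + 1)) • h}
  add_mem' := by
    intro a b ha hb
    intro k
    obtain ⟨h1, h2⟩ := ha k
    obtain ⟨h3, h4⟩ := hb k
    exact ⟨by rw [mul_add, h1, h3, smul_add], by rw [add_mul, h2, h4, smul_add]⟩
  zero_mem' := by intro k; simp
  smul_mem' := by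
    intro c a ha
    intro k
    obtain ⟨h1, h2⟩ := ha k
    constructor
    · rw [mul_smul_comm, h1, smul_comm]
    · rw [smul_mul_assoc, h2, smul_comm]

end Paper

namespace Paper

/-! Since `n < e`, a residue sequence misses some residue `t`. Cutting the cycle `ℤ/eℤ` at `t` lifts
the sequence to a word `w` of integers, for which the defining relations are those of the linear
quiver.

To a word `w` of length `m` and an integer `c` attach `∏ j, f j`, where `f j` is `1 / (1 - y_j z)`
if `w j = c`, is `1 - y_j z` if `w j = c + 1`, and is `1` otherwise. A priori a power series in `z`,
it acts on the weight space of `w` as a polynomial of the degree predicted by counting letters and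
the charges that are at most `c`. This goes by induction on `m`. Adjoining a strand of residue `c`
lowers the degree by one, which amounts to the vanishing of a single critical coefficient. If the
critical coefficient does not kill some vector, the relations force `w` to be an increasing string
of consecutive integers, and there the cyclotomic relation kills it after all.

Negating all residues reverses the quiver, so the bound also holds for the reflected series. With
`c = w m`, the reflected series of the letters before `w m` times the series of the letters up to
`w m` is `1 / (1 - y_m z)`, and the degrees add up to `ℓ - 1`. Hence `y_m ^ ℓ = 0`. -/

open scoped PowerSeries

section PowerSeries

variable {R : Type*} [CommRing R]

/-- The series `∑ aᵏ Xᵏ`, that is, `(1 - a X)⁻¹`. -/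
def geomSeries (a : R) : R⟦X⟧ := PowerSeries.mk fun k => a ^ k

lemma geomSeries_mul_one_sub (a : R) :
    geomSeries a * (1 - PowerSeries.C a * PowerSeries.X) = 1 := by
  have h := congrArg (PowerSeries.rescale a) (PowerSeries.mk_one_mul_one_sub_eq_one R)
  rw [map_mul, map_sub, map_one, PowerSeries.rescale_X, PowerSeries.rescale_mk] at h
  rw [← h, geomSeries]
  congr 2
  ext k
  simp

lemma map_geomSeries {S : Type*} [CommRing S] (f : R →+* S) (a : R) :
    PowerSeries.map f (geomSeries a) = geomSeries (f a) := by
  ext k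
  simp [geomSeries]

lemma mul_geomSeries_eq (F : R⟦X⟧) (a : R) :
    F * geomSeries a = F + PowerSeries.C a * PowerSeries.X * (F * geomSeries a) := by
  linear_combination F * geomSeries_mul_one_sub a

lemma coeff_succ_mul_geomSeries (F : R⟦X⟧) (a : R) (k : ℕ) :
    PowerSeries.coeff (k + 1) (F * geomSeries a) =
      PowerSeries.coeff (k + 1) F + a * PowerSeries.coeff k (F * geomSeries a) := by
  conv_lhs => rw [mul_geomSeries_eq, map_add, mul_assoc, PowerSeries.coeff_C_mul,
    PowerSeries.coeff_succ_X_mul]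

lemma geomSeries_sub_geomSeries (a b : R) :
    geomSeries b - geomSeries a =
      PowerSeries.C (b - a) * PowerSeries.X * (geomSeries a * geomSeries b) := by
  rw [map_sub]
  linear_combination geomSeries a * geomSeries_mul_one_sub b -
    geomSeries b * geomSeries_mul_one_sub a

variable {M : Type*} [AddCommGroup M] [Module R M]

/-- The series `F`, acting on `N` coefficient by coefficient, is polynomial of degree at most `d`.
The bound is an integer, and for `d < 0` it says that `F` kills `N`. -/
def HasDegreeLEOn (F : R⟦X⟧) (N : Submodule R M) (d : ℤ) : Prop :=
  ∀ k : ℕ, d < k → ∀ v ∈ N, PowerSeries.coeff k F • v = 0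

namespace HasDegreeLEOn

variable {F G : R⟦X⟧} {N : Submodule R M} {d d' : ℤ}

lemma one (hd : 0 ≤ d) : HasDegreeLEOn (1 : R⟦X⟧) N d := by
  intro k hk v _
  rw [PowerSeries.coeff_one, if_neg (by omega), zero_smul]

lemma one_sub_C_mul_X (a : R) : HasDegreeLEOn (1 - PowerSeries.C a * PowerSeries.X) N 1 := by
  intro k hk v _
  rw [map_sub, PowerSeries.coeff_one, PowerSeries.coeff_C_mul, PowerSeries.coeff_X,
    if_neg (by omega), if_neg (by omega), mul_zero, sub_zero, zero_smul]

lemma mul (hF : HasDegreeLEOn F N d) (hG : HasDegreeLEOn G N d') :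
    HasDegreeLEOn (F * G) N (d + d') := by
  intro k hk v hv
  rw [PowerSeries.coeff_mul, Finset.sum_smul]
  refine Finset.sum_eq_zero fun ⟨p, q⟩ hpq => ?_
  have hsum : p + q = k := Finset.HasAntidiagonal.mem_antidiagonal.mp hpq
  rcases lt_or_ge d p with hp | hp
  · rw [mul_comm, mul_smul, hF p hp v hv, smul_zero]
  · rw [mul_smul, hG q (by omega) v hv, smul_zero]

/-- Above degree `d` the coefficients of `F / (1 - a X)` are those in degree `d` times powers
of `a`, so only the coefficient in degree `d` needs attention. -/
lemma mul_geomSeries {a : R} (hF : HasDegreeLEOn F N d)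
    (hcrit : ∀ k : ℕ, (k : ℤ) = d → ∀ v ∈ N, PowerSeries.coeff k (F * geomSeries a) • v = 0) :
    HasDegreeLEOn (F * geomSeries a) N (d - 1) := by
  intro k hk v hv
  induction k with
  | zero =>
    rcases (show d = 0 ∨ d < 0 by omega) with h | h
    · exact hcrit 0 (by omega) v hv
    · have := hF 0 (by omega) v hv
      simpa [geomSeries] using this
  | succ k ih =>
    rcases eq_or_ne ((k + 1 : ℕ) : ℤ) d with h | h
    · exact hcrit _ h v hv
    · rw [coeff_succ_mul_geomSeries, add_smul, mul_smul, hF _ (by omega) v hv,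
        ih (by omega), smul_zero, add_zero]

end HasDegreeLEOn

/-- The factor by which a strand of residue `x` carrying the dot `a` enters the generating
function of residue `c`. -/
noncomputable def localFactor (c x : ℤ) (a : R) : R⟦X⟧ :=
  if x = c then geomSeries a
  else if x = c + 1 then 1 - PowerSeries.C a * PowerSeries.X else 1

/-- The degree of `localFactor c x` in the series variable. -/
def localDegree (c x : ℤ) : ℤ := if x = c then -1 else if x = c + 1 then 1 else 0

lemma map_localFactor {S : Type*} [CommRing S] (f : R →+* S) (c x : ℤ) (a : R) :
    PowerSeries.map f (localFactor c x a) = localFactor c x (f a) := by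
  unfold localFactor
  split_ifs <;> simp [map_geomSeries]

lemma localFactor_self (c : ℤ) (a : R) : localFactor c c a = geomSeries a := if_pos rfl

lemma localDegree_self (c : ℤ) : localDegree c c = -1 := if_pos rfl

lemma localFactor_of_ne {c x : ℤ} (h : x ≠ c) (h' : x ≠ c + 1) (a : R) :
    localFactor c x a = 1 := by
  rw [localFactor, if_neg h, if_neg h']

lemma hasDegreeLEOn_localFactor {c x : ℤ} (h : x ≠ c) (a : R) (N : Submodule R M) :
    HasDegreeLEOn (localFactor c x a) N (localDegree c x) := by
  rw [localFactor, localDegree, if_neg h, if_neg h]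
  split_ifs
  · exact .one_sub_C_mul_X a
  · exact .one le_rfl

lemma localFactor_reflect_mul (c x : ℤ) (a : R) :
    localFactor (-(c + 1)) (-x) a * localFactor c x a = 1 := by
  unfold localFactor
  split_ifs <;> first | omega | simp [geomSeries_mul_one_sub, mul_comm _ (geomSeries a)]

lemma localDegree_reflect_add (c x : ℤ) :
    localDegree (-(c + 1)) (-x) + localDegree c x = 0 := by
  unfold localDegree
  split_ifs <;> omega

end PowerSeries

section Words

open MvPolynomial (X rename)

/-- The ring of polynomials in the dots. It has a variable for every natural number, so that it does
not depend on the number of strands. -/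
abbrev YPoly := MvPolynomial ℕ ℤ

/-- The simple transposition of the strands `r` and `r + 1`. -/
abbrev adjSwap (r : ℕ) : Equiv.Perm ℕ := Equiv.swap r (r + 1)

/-- The generating function of residue `c` of the first `m` strands of the word `w`. -/
noncomputable def wordSeries (c : ℤ) (w : ℕ → ℤ) (m : ℕ) : YPoly⟦X⟧ :=
  ∏ j ∈ Finset.range m, localFactor c (w j) (X j)

/-- The degree of `wordSeries c w m` in the series variable. -/
def wordDegree (c : ℤ) (w : ℕ → ℤ) (m : ℕ) : ℤ :=
  ∑ j ∈ Finset.range m, localDegree c (w j)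

variable {c : ℤ} {w : ℕ → ℤ} {m r : ℕ}

lemma wordSeries_succ : wordSeries c w (m + 1) =
    wordSeries c w m * localFactor c (w m) (X m) :=
  Finset.prod_range_succ _ _

lemma wordDegree_succ : wordDegree c w (m + 1) = wordDegree c w m + localDegree c (w m) :=
  Finset.sum_range_succ _ _

lemma wordSeries_congr {w' : ℕ → ℤ} (h : ∀ j < m, w j = w' j) :
    wordSeries c w m = wordSeries c w' m :=
  Finset.prod_congr rfl fun j hj => by rw [h j (Finset.mem_range.mp hj)]

lemma wordDegree_congr {w' : ℕ → ℤ} (h : ∀ j < m, w j = w' j) :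
    wordDegree c w m = wordDegree c w' m :=
  Finset.sum_congr rfl fun j hj => by rw [h j (Finset.mem_range.mp hj)]

lemma comp_adjSwap_of_lt {j : ℕ} (hj : j < r) : (w ∘ adjSwap r) j = w j := by
  rw [Function.comp_apply, Equiv.swap_apply_of_ne_of_ne (by omega) (by omega)]

lemma comp_adjSwap_of_gt {j : ℕ} (hj : r + 1 < j) : (w ∘ adjSwap r) j = w j := by
  rw [Function.comp_apply, Equiv.swap_apply_of_ne_of_ne (by omega) (by omega)]

lemma comp_adjSwap_left : (w ∘ adjSwap r) r = w (r + 1) := by simp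

lemma comp_adjSwap_of_eq (h : w r = w (r + 1)) : w ∘ adjSwap r = w := by
  rw [Equiv.comp_swap_eq_update, h, Function.update_eq_self, ← h, Function.update_eq_self]

lemma adjSwap_support_subset (hr : r + 1 < m) : {j | adjSwap r j ≠ j} ⊆ Finset.range m := by
  intro j hj
  have hj' := (Equiv.swap_apply_ne_self_iff.mp hj).2
  rw [Finset.mem_coe, Finset.mem_range]
  omega

lemma wordDegree_comp_adjSwap (hr : r + 1 < m) :
    wordDegree c (w ∘ adjSwap r) m = wordDegree c w m :=
  Equiv.Perm.sum_comp (adjSwap r) (Finset.range m) (fun j => localDegree c (w j))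
    (adjSwap_support_subset hr)

lemma map_rename_wordSeries (τ : ℕ → ℕ) :
    PowerSeries.map (rename τ : YPoly →ₐ[ℤ] YPoly).toRingHom (wordSeries c w m) =
      ∏ j ∈ Finset.range m, localFactor c (w j) (X (τ j)) := by
  rw [wordSeries, map_prod]
  refine Finset.prod_congr rfl fun j _ => ?_
  rw [map_localFactor]
  exact congrArg _ (MvPolynomial.rename_X τ j)

lemma rename_coeff_wordSeries (hr : r + 1 < m) (k : ℕ) :
    rename (adjSwap r) (PowerSeries.coeff k (wordSeries c w m)) =
      PowerSeries.coeff k (wordSeries c (w ∘ adjSwap r) m) := by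
  have hmap := map_rename_wordSeries (c := c) (w := w) (m := m) (adjSwap r)
  rw [← Equiv.Perm.prod_comp (adjSwap r) (Finset.range m) _ (adjSwap_support_subset hr)] at hmap
  simp only [Equiv.swap_apply_self] at hmap
  exact (PowerSeries.coeff_map _ _ _).symm.trans (congrArg _ hmap)

lemma rename_coeff_wordSeries_mul_geomSeries (r k : ℕ) :
    rename (adjSwap r)
        (PowerSeries.coeff k (wordSeries c w r * geomSeries (X (r + 1)))) =
      PowerSeries.coeff k (wordSeries c w r * geomSeries (X r)) := by
  have hX : rename (adjSwap r) (X (r + 1) : YPoly) =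
      X r := by
    rw [MvPolynomial.rename_X, Equiv.swap_apply_right]
  have hword : ∏ j ∈ Finset.range r, localFactor c (w j) (X (adjSwap r j) : YPoly) =
      wordSeries c w r := by
    refine Finset.prod_congr rfl fun j hj => ?_
    have hj' := Finset.mem_range.mp hj
    rw [Equiv.swap_apply_of_ne_of_ne (by omega) (by omega)]
  refine (PowerSeries.coeff_map _ _ _).symm.trans (congrArg _ ?_)
  rw [map_mul, map_geomSeries, map_rename_wordSeries, hword]
  exact congrArg _ (congrArg geomSeries hX)

lemma wordSeries_reflect_mul (w : ℕ → ℤ) (m : ℕ) :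
    wordSeries (-(w m + 1)) (-w) m * wordSeries (w m) w (m + 1) = geomSeries (X m) := by
  rw [wordSeries_succ, ← mul_assoc, wordSeries, wordSeries, ← Finset.prod_mul_distrib,
    Finset.prod_eq_one fun j _ => localFactor_reflect_mul _ _ _, one_mul, localFactor_self]

lemma wordDegree_reflect_add (w : ℕ → ℤ) (m : ℕ) :
    wordDegree (-(w m + 1)) (-w) m + wordDegree (w m) w (m + 1) = -1 := by
  rw [wordDegree_succ, ← add_assoc, wordDegree, wordDegree, ← Finset.sum_add_distrib,
    Finset.sum_eq_zero fun j _ => ?_, zero_add, localDegree_self]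
  exact localDegree_reflect_add (w m) (w j)

/-- The letters of `w` in the positions `i, …, m` increase by one at each step. -/
def IsString (w : ℕ → ℤ) (i m : ℕ) : Prop :=
  ∀ j, i ≤ j → j ≤ m → w j = w m + j - m

namespace IsString

variable {w : ℕ → ℤ} {i m : ℕ} {c : ℤ}

lemma cons (h : IsString w (i + 1) m) (hi : w i = w (i + 1) - 1) (him : i + 1 ≤ m) :
    IsString w i m := by
  intro j hij hjm
  rcases eq_or_lt_of_le hij with rfl | hij
  · have := h (i + 1) le_rfl him
    push_cast at this
    omega
  · exact h j hij hjm

lemma wordSeries_eq_one (hword : IsString w 0 m) (hi : i ≤ m)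
    (hc : w m + i - m ≤ c) : wordSeries c w i = 1 :=
  Finset.prod_eq_one fun j hj => by
    have hj' := Finset.mem_range.mp hj
    have hletter := hword j (by omega) (by omega)
    exact localFactor_of_ne (by omega) (by omega) _

lemma wordDegree_eq_zero (hword : IsString w 0 m) (hi : i ≤ m)
    (hc : w m + i - m ≤ c) : wordDegree c w i = 0 :=
  Finset.sum_eq_zero fun j hj => by
    have hj' := Finset.mem_range.mp hj
    have hletter := hword j (by omega) (by omega)
    rw [localDegree, if_neg (by omega), if_neg (by omega)]

end IsString

end Words

section Charges

variable {ι : Type*} [Fintype ι] (κ : ι → ℤ)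

/-- The number of charges that are at most `c`. -/
def chargesLE (c : ℤ) : ℕ := (Finset.univ.filter fun l => κ l ≤ c).card

/-- The number of charges equal to `c`, that is, `(Λ, α_c)`. -/
def chargesEq (c : ℤ) : ℕ := (Finset.univ.filter fun l => κ l = c).card

lemma chargesLE_sub_one_add (c : ℤ) :
    chargesLE κ (c - 1) + chargesEq κ c = chargesLE κ c := by
  have hsplit : (Finset.univ.filter fun l => κ l ≤ c) =
      (Finset.univ.filter fun l => κ l ≤ c - 1) ∪ Finset.univ.filter fun l => κ l = c := by
    rw [← Finset.filter_or]
    exact Finset.filter_congr fun l _ => by omega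
  rw [chargesLE, chargesLE, chargesEq, hsplit, Finset.card_union_of_disjoint]
  exact Finset.disjoint_filter.mpr fun l _ _ => by omega

lemma chargesLE_add_chargesLE_reflect (c : ℤ) :
    chargesLE (-κ) (-(c + 1)) + chargesLE κ c = Fintype.card ι := by
  have hreflect : (Finset.univ.filter fun l => (-κ) l ≤ -(c + 1)) =
      Finset.univ.filter fun l => ¬ κ l ≤ c :=
    Finset.filter_congr fun l _ => by rw [Pi.neg_apply]; omega
  rw [chargesLE, chargesLE, hreflect, add_comm, Finset.card_filter_add_card_filter_not,
    Finset.card_univ]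

end Charges

section LinearKLR

open MvPolynomial (X rename)

variable {ι M : Type*} [Fintype ι] [AddCommGroup M] [Module YPoly M]

/-- The weight spaces `W w`, dots `X j` and crossings `ψ r` of a module over the cyclotomic KLR
algebra on `n` strands of the linear quiver `… → -1 → 0 → 1 → …`, with fundamental weights `κ`.
Only those consequences of the relations are recorded that do not depend on the orientation of
the quiver, so that the notion is stable under negating all residues. -/
structure IsLinearKLRModule (n : ℕ) (κ : ι → ℤ) (W : (ℕ → ℤ) → Submodule YPoly M)
    (ψ : ℕ → M →+ M) : Prop where
  psi_mem {r : ℕ} {w : ℕ → ℤ} {v : M} : r + 1 < n → v ∈ W w → ψ r v ∈ W (w ∘ adjSwap r)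
  psi_X_smul {r j : ℕ} {w : ℕ → ℤ} {v : M} : r + 1 < n → v ∈ W w →
    w r ≠ w (r + 1) ∨ j ≠ r ∧ j ≠ r + 1 →
    ψ r ((X j : YPoly) • v) = (X (adjSwap r j) : YPoly) • ψ r v
  psi_X_left_smul {r : ℕ} {w : ℕ → ℤ} {v : M} : r + 1 < n → v ∈ W w → w r = w (r + 1) →
    ψ r ((X r : YPoly) • v) = (X (r + 1) : YPoly) • ψ r v - v
  psi_X_right_smul {r : ℕ} {w : ℕ → ℤ} {v : M} : r + 1 < n → v ∈ W w → w r = w (r + 1) →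
    ψ r ((X (r + 1) : YPoly) • v) = (X r : YPoly) • ψ r v + v
  psi_psi {r : ℕ} {w : ℕ → ℤ} {v : M} : r + 1 < n → v ∈ W w → w r = w (r + 1) →
    ψ r (ψ r v) = 0
  eq_zero_of_far {r : ℕ} {w : ℕ → ℤ} {v : M} : r + 1 < n → v ∈ W w → w r ≠ w (r + 1) →
    w r ≠ w (r + 1) + 1 → w (r + 1) ≠ w r + 1 → ψ r v = 0 → v = 0
  X_smul_eq_of_adjacent {r : ℕ} {w : ℕ → ℤ} {v : M} : r + 1 < n → v ∈ W w →
    w r = w (r + 1) + 1 ∨ w (r + 1) = w r + 1 → ψ r v = 0 →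
    (X (r + 1) : YPoly) • v = (X r : YPoly) • v
  eq_zero_of_braid {r : ℕ} {w : ℕ → ℤ} {v : M} : r + 2 < n → v ∈ W w → w (r + 2) = w r →
    w r = w (r + 1) + 1 ∨ w (r + 1) = w r + 1 → ψ r v = 0 → ψ (r + 1) v = 0 → v = 0
  cyc {w : ℕ → ℤ} {v : M} : 0 < n → v ∈ W w →
    (X 0 ^ chargesEq κ (w 0) : YPoly) • v = 0

/-- The generating functions of the first `m` strands act on every weight space with the degree
predicted by the charges and the residues. -/
def DegreeBound (κ : ι → ℤ) (W : (ℕ → ℤ) → Submodule YPoly M) (m : ℕ) : Prop :=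
  ∀ w c, HasDegreeLEOn (wordSeries c w m) (W w) (chargesLE κ c + wordDegree c w m)

/-- The vector `u` arises from the only coefficient whose vanishing `DegreeBound κ W m` does not
hand on to `DegreeBound κ W (m + 1)` formally. -/
def IsCritical (κ : ι → ℤ) (W : (ℕ → ℤ) → Submodule YPoly M) (m : ℕ) (w : ℕ → ℤ) (u : M) : Prop :=
  ∃ k : ℕ, (k : ℤ) = chargesLE κ (w m) + wordDegree (w m) w m ∧
    ∃ v ∈ W w, u = PowerSeries.coeff k (wordSeries (w m) w (m + 1)) • v

/-- Every nonzero critical vector of level `m` lives on a word with a string in the positions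
`i, …, m`, and identifies the dots at its two ends. -/
def CriticalString (κ : ι → ℤ) (W : (ℕ → ℤ) → Submodule YPoly M) (i m : ℕ) : Prop :=
  ∀ w u, IsCritical κ W m w u → u ≠ 0 →
    IsString w i m ∧ (X m : YPoly) • u = (X i : YPoly) • u

variable {κ : ι → ℤ} {W : (ℕ → ℤ) → Submodule YPoly M} {m : ℕ} {w : ℕ → ℤ} {u v : M}

lemma IsCritical.mem (hu : IsCritical κ W m w u) : u ∈ W w := by
  obtain ⟨k, _, v, hv, rfl⟩ := hu
  exact (W w).smul_mem _ hv

lemma DegreeBound.coeff_wordSeries_mul_geomSeries_smul_eq_zero (hB : DegreeBound κ W (m + 1))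
    (hv : v ∈ W w) {k : ℕ} (hk : chargesLE κ (w m) + wordDegree (w m) w m - 1 < k) :
    PowerSeries.coeff k (wordSeries (w m) w m * geomSeries (X m)) • v = 0 := by
  have hdeg := hB w (w m) k
  rw [wordSeries_succ, wordDegree_succ, localFactor_self, localDegree_self] at hdeg
  exact hdeg (by omega) v hv

lemma DegreeBound.X_pow_chargesLE_smul_eq_zero (hB : DegreeBound κ W (m + 1)) (hv : v ∈ W w)
    (hword : IsString w 0 (m + 1)) : (X m ^ chargesLE κ (w (m + 1) - 1) : YPoly) • v = 0 := by
  have hletter := hword m (by omega) (by omega)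
  have hdeg := hB w (w (m + 1) - 1) (chargesLE κ (w (m + 1) - 1))
  rw [wordSeries_succ, wordDegree_succ, hword.wordSeries_eq_one (by omega) (by omega),
    hword.wordDegree_eq_zero (by omega) (by omega), one_mul, localFactor, localDegree,
    if_pos (by push_cast at hletter; omega), if_pos (by push_cast at hletter; omega), geomSeries,
    PowerSeries.coeff_mk] at hdeg
  exact hdeg (by omega) v hv

namespace IsLinearKLRModule

variable {n r s : ℕ} {ψ : ℕ → M →+ M} {c : ℤ}

lemma neg (h : IsLinearKLRModule n κ W ψ) :
    IsLinearKLRModule n (-κ) (fun w => W (-w)) ψ where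
  psi_mem hr hv := h.psi_mem hr hv
  psi_X_smul hr hv hne := h.psi_X_smul hr hv (by simpa only [Pi.neg_apply, ne_eq, neg_inj])
  psi_X_left_smul hr hv heq := h.psi_X_left_smul hr hv (by simpa only [Pi.neg_apply, neg_inj])
  psi_X_right_smul hr hv heq := h.psi_X_right_smul hr hv (by simpa only [Pi.neg_apply, neg_inj])
  psi_psi hr hv heq := h.psi_psi hr hv (by simpa only [Pi.neg_apply, neg_inj])
  eq_zero_of_far hr hv h₀ h₁ h₂ := h.eq_zero_of_far hr hv
    (by rw [Pi.neg_apply, Pi.neg_apply]; omega) (by rw [Pi.neg_apply, Pi.neg_apply]; omega)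
    (by rw [Pi.neg_apply, Pi.neg_apply]; omega)
  X_smul_eq_of_adjacent hr hv hadj := h.X_smul_eq_of_adjacent hr hv
    (by rw [Pi.neg_apply, Pi.neg_apply]; omega)
  eq_zero_of_braid hr hv h₀ hadj := h.eq_zero_of_braid hr hv
    (by rw [Pi.neg_apply, Pi.neg_apply]; omega) (by rw [Pi.neg_apply, Pi.neg_apply]; omega)
  cyc {w v} hn hv := by
    simpa only [chargesEq, Pi.neg_apply, neg_eq_iff_eq_neg] using h.cyc hn hv

lemma psi_smul_of_ne (h : IsLinearKLRModule n κ W ψ) (hr : r + 1 < n) (hv : v ∈ W w)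
    (hne : w r ≠ w (r + 1)) (f : YPoly) :
    ψ r (f • v) = rename (adjSwap r) f • ψ r v := by
  induction f using MvPolynomial.induction_on with
  | C a => simp only [eq_intCast, map_intCast, map_intCast_smul (ψ r) YPoly YPoly]
  | add f g hf hg => simp only [add_smul, map_add, hf, hg]
  | mul_X f j hf =>
    rw [mul_comm, mul_smul, h.psi_X_smul hr ((W w).smul_mem f hv) (.inl hne), hf, map_mul,
      MvPolynomial.rename_X, mul_smul]

lemma exists_psi_X_smul (h : IsLinearKLRModule n κ W ψ) (hr : r + 1 < n)
    (heq : w r = w (r + 1)) (j : ℕ) :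
    ∃ δ : YPoly, (X (r + 1) - X r) * δ = X j - X (adjSwap r j) ∧
      ∀ v ∈ W w, ψ r ((X j : YPoly) • v) = (X (adjSwap r j) : YPoly) • ψ r v + δ • v := by
  rcases eq_or_ne j r with rfl | hjr
  · refine ⟨-1, by rw [Equiv.swap_apply_left]; ring, fun v hv => ?_⟩
    rw [h.psi_X_left_smul hr hv heq, Equiv.swap_apply_left, neg_one_smul, sub_eq_add_neg]
  rcases eq_or_ne j (r + 1) with rfl | hjr'
  · refine ⟨1, by rw [Equiv.swap_apply_right]; ring, fun v hv => ?_⟩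
    rw [h.psi_X_right_smul hr hv heq, Equiv.swap_apply_right, one_smul]
  · refine ⟨0, by rw [Equiv.swap_apply_of_ne_of_ne hjr hjr']; ring, fun v hv => ?_⟩
    rw [h.psi_X_smul hr hv (.inr ⟨hjr, hjr'⟩), zero_smul, add_zero]

lemma exists_demazure (h : IsLinearKLRModule n κ W ψ) (hr : r + 1 < n)
    (heq : w r = w (r + 1)) (f : YPoly) :
    ∃ g : YPoly, (X (r + 1) - X r) * g = f - rename (adjSwap r) f ∧
      ∀ v ∈ W w, ψ r (f • v) = rename (adjSwap r) f • ψ r v + g • v := by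
  induction f using MvPolynomial.induction_on with
  | C a =>
    refine ⟨0, by simp, fun v _ => ?_⟩
    simp only [eq_intCast, map_intCast, map_intCast_smul (ψ r) YPoly YPoly, zero_smul, add_zero]
  | add f₁ f₂ ih₁ ih₂ =>
    obtain ⟨g₁, hg₁, hψ₁⟩ := ih₁
    obtain ⟨g₂, hg₂, hψ₂⟩ := ih₂
    refine ⟨g₁ + g₂, by rw [map_add]; linear_combination hg₁ + hg₂, fun v hv => ?_⟩
    rw [add_smul, map_add, hψ₁ v hv, hψ₂ v hv, map_add]
    module
  | mul_X f j ih =>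
    obtain ⟨g, hg, hψ⟩ := ih
    obtain ⟨δ, hδ, hψδ⟩ := h.exists_psi_X_smul hr heq j
    refine ⟨X (adjSwap r j) * g + δ * f, ?_, fun v hv => ?_⟩
    · rw [map_mul, MvPolynomial.rename_X]
      linear_combination X (adjSwap r j) * hg + f * hδ
    · rw [mul_comm f, mul_smul, hψδ _ ((W w).smul_mem f hv), hψ v hv, map_mul,
        MvPolynomial.rename_X]
      module

lemma psi_smul_of_eq (h : IsLinearKLRModule n κ W ψ) (hr : r + 1 < n) (hv : v ∈ W w)
    (heq : w r = w (r + 1)) {f g : YPoly}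
    (hg : (X (r + 1) - X r) * g = f - rename (adjSwap r) f) :
    ψ r (f • v) = rename (adjSwap r) f • ψ r v + g • v := by
  obtain ⟨g', hg', hψ⟩ := h.exists_demazure hr heq f
  have hX : (X (r + 1) - X r : YPoly) ≠ 0 :=
    sub_ne_zero.mpr fun hX => r.succ_ne_self (MvPolynomial.X_injective hX)
  rw [hψ v hv, mul_left_cancel₀ hX (hg.trans hg'.symm)]

lemma psi_coeff_wordSeries_smul (h : IsLinearKLRModule n κ W ψ) (hr : r + 1 < n) (hrm : r + 1 < m)
    (hv : v ∈ W w) (k : ℕ) :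
    ψ r (PowerSeries.coeff k (wordSeries c w m) • v) =
      PowerSeries.coeff k (wordSeries c (w ∘ adjSwap r) m) • ψ r v := by
  have hrename := rename_coeff_wordSeries (c := c) (w := w) hrm k
  rcases eq_or_ne (w r) (w (r + 1)) with heq | hne
  · rw [comp_adjSwap_of_eq heq] at hrename ⊢
    rw [h.psi_smul_of_eq hr hv heq (g := 0) (by rw [hrename, sub_self, mul_zero]), hrename,
      zero_smul, add_zero]
  · rw [h.psi_smul_of_ne hr hv hne, hrename]

lemma isCritical_psi (h : IsLinearKLRModule n κ W ψ) (hr : r + 1 < n) (hrm : r + 1 < m)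
    (hu : IsCritical κ W m w u) : IsCritical κ W m (w ∘ adjSwap r) (ψ r u) := by
  obtain ⟨k, hk, v, hv, rfl⟩ := hu
  refine ⟨k, ?_, ψ r v, h.psi_mem hr hv, ?_⟩
  · rw [comp_adjSwap_of_gt hrm, wordDegree_comp_adjSwap hrm, hk]
  · rw [comp_adjSwap_of_gt hrm, h.psi_coeff_wordSeries_smul hr (by omega) hv]

lemma psi_coeff_eq_zero_of_ne (h : IsLinearKLRModule n κ W ψ) (hs : s + 1 < n)
    (hB : DegreeBound κ W (s + 1)) (hv : v ∈ W w) (hne : w s ≠ w (s + 1)) {k : ℕ}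
    (hk : chargesLE κ (w (s + 1)) + wordDegree (w (s + 1)) w s - 1 < k) :
    ψ s (PowerSeries.coeff k (wordSeries (w (s + 1)) w s * geomSeries (X (s + 1))) • v) = 0 := by
  have hword : ∀ j < s, w j = (w ∘ adjSwap s) j := fun j hj => (comp_adjSwap_of_lt hj).symm
  rw [h.psi_smul_of_ne hs hv hne, rename_coeff_wordSeries_mul_geomSeries, wordSeries_congr hword]
  rw [wordDegree_congr hword] at hk
  rw [← comp_adjSwap_left (w := w) (r := s)] at hk ⊢
  exact hB.coeff_wordSeries_mul_geomSeries_smul_eq_zero (h.psi_mem hs hv) hk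

/-- Since the coefficient `g` is a divided difference of a coefficient known to vanish, `g • v`
is `ψ s (f • v)` and dies under `ψ s`; applying this to `X s • v` instead of `v` isolates
`g • v`. -/
lemma critical_eq_zero_of_eq (h : IsLinearKLRModule n κ W ψ) (hs : s + 1 < n)
    (hB : DegreeBound κ W (s + 1)) (hu : IsCritical κ W (s + 1) w u) (heq : w s = w (s + 1)) :
    u = 0 := by
  obtain ⟨k, hk, v, hv, rfl⟩ := hu
  set f : YPoly := PowerSeries.coeff (k + 1) (wordSeries (w s) w s * geomSeries (X (s + 1)))
  set g : YPoly := PowerSeries.coeff k (wordSeries (w (s + 1)) w (s + 2)) with hg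
  have hgeom : wordSeries (w (s + 1)) w (s + 2) =
      wordSeries (w s) w s * geomSeries (X s) * geomSeries (X (s + 1)) := by
    rw [wordSeries_succ, wordSeries_succ, localFactor, localFactor, if_pos heq, if_pos rfl, heq]
  rw [← heq, wordDegree_succ, localDegree_self] at hk
  have hdemazure : (X (s + 1) - X s) * g = f - rename (adjSwap s) f := by
    rw [rename_coeff_wordSeries_mul_geomSeries, ← map_sub, ← mul_sub, geomSeries_sub_geomSeries,
      hg, hgeom, ← PowerSeries.coeff_C_mul, ← PowerSeries.coeff_succ_X_mul]
    ring_nf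
  have hpsi : ∀ x ∈ W w, ψ s (f • x) = g • x := fun x hx => by
    have hx' := h.psi_mem hs hx
    rw [comp_adjSwap_of_eq heq] at hx'
    rw [h.psi_smul_of_eq hs hx heq hdemazure, rename_coeff_wordSeries_mul_geomSeries,
      hB.coeff_wordSeries_mul_geomSeries_smul_eq_zero hx' (by push_cast; omega), zero_add]
  have hkill : ∀ x ∈ W w, ψ s (g • x) = 0 := fun x hx => by
    rw [← hpsi x hx, h.psi_psi hs ((W w).smul_mem f hx) heq]
  have hX := h.psi_X_left_smul hs ((W w).smul_mem g hv) heq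
  rw [smul_comm, hkill _ ((W w).smul_mem _ hv), hkill v hv, smul_zero, zero_sub] at hX
  exact neg_eq_zero.mp hX.symm

lemma critical_eq_zero_of_eq_add_one (h : IsLinearKLRModule n κ W ψ) (hs : s + 1 < n)
    (hB : DegreeBound κ W s) (hB' : DegreeBound κ W (s + 1)) (hu : IsCritical κ W (s + 1) w u)
    (hadj : w s = w (s + 1) + 1) : u = 0 := by
  obtain ⟨k, hk, v, hv, rfl⟩ := hu
  rw [wordDegree_succ, localDegree, if_neg (by omega), if_pos hadj] at hk
  set F := wordSeries (w (s + 1)) w s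
  have hexpand : wordSeries (w (s + 1)) w (s + 2) =
      F + PowerSeries.C (X (s + 1) - X s) * (PowerSeries.X * (F * geomSeries (X (s + 1)))) := by
    rw [wordSeries_succ, wordSeries_succ, localFactor, localFactor, if_neg (by omega),
      if_pos hadj, if_pos rfl, map_sub]
    linear_combination F * geomSeries_mul_one_sub (X (s + 1) : YPoly)
  rw [hexpand, map_add, add_smul, hB w _ k (by omega) v hv, zero_add, PowerSeries.coeff_C_mul]
  cases k with
  | zero => rw [PowerSeries.coeff_zero_X_mul, mul_zero, zero_smul]
  | succ k =>
    have hpsi := h.psi_coeff_eq_zero_of_ne hs hB' hv (by omega) (k := k) (by push_cast at hk; omega)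
    rw [PowerSeries.coeff_succ_X_mul, mul_smul, sub_smul, sub_eq_zero]
    exact h.X_smul_eq_of_adjacent hs ((W w).smul_mem _ hv) (.inl hadj) hpsi

lemma psi_critical_eq_zero (h : IsLinearKLRModule n κ W ψ) (hs : s + 1 < n)
    (hB : DegreeBound κ W (s + 1)) (hu : IsCritical κ W (s + 1) w u) (hne : w s ≠ w (s + 1))
    (hne' : w s ≠ w (s + 1) + 1) : ψ s u = 0 := by
  obtain ⟨k, hk, v, hv, rfl⟩ := hu
  rw [wordDegree_succ, localDegree, if_neg hne, if_neg hne'] at hk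
  rw [wordSeries_succ, wordSeries_succ, localFactor_of_ne hne hne', mul_one, localFactor_self]
  exact h.psi_coeff_eq_zero_of_ne hs hB hv hne (by omega)

lemma isString_critical_base (h : IsLinearKLRModule n κ W ψ) (hs : s + 1 < n)
    (hB : DegreeBound κ W s) (hB' : DegreeBound κ W (s + 1)) (hu : IsCritical κ W (s + 1) w u)
    (hu₀ : u ≠ 0) :
    IsString w s (s + 1) ∧ (X (s + 1) : YPoly) • u = (X s : YPoly) • u := by
  have hne : w s ≠ w (s + 1) := fun heq => hu₀ (h.critical_eq_zero_of_eq hs hB' hu heq)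
  have hne' : w s ≠ w (s + 1) + 1 := fun hadj =>
    hu₀ (h.critical_eq_zero_of_eq_add_one hs hB hB' hu hadj)
  have hpsi := h.psi_critical_eq_zero hs hB' hu hne hne'
  have hadj : w (s + 1) = w s + 1 := by
    by_contra hfar
    exact hu₀ (h.eq_zero_of_far hs hu.mem hne hne' hfar hpsi)
  refine ⟨fun j hsj hjs => ?_, h.X_smul_eq_of_adjacent hs hu.mem (.inr hadj) hpsi⟩
  obtain rfl | rfl : j = s ∨ j = s + 1 := by omega
  · push_cast; omega
  · push_cast; omega

lemma critical_eq_zero_of_repeat (h : IsLinearKLRModule n κ W ψ) (hm : m < n) (hrm : r + 1 < m)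
    (hstr : CriticalString κ W (r + 1) m) (hu : IsCritical κ W m w u) (heq : w r = w (r + 1)) :
    u = 0 := by
  by_contra hu₀
  have hr : r + 1 < n := by omega
  have hcrit := h.isCritical_psi hr hrm hu
  rw [comp_adjSwap_of_eq heq] at hcrit
  have hX : (X m : YPoly) • ψ r u = (X (r + 1) : YPoly) • ψ r u := by
    rcases eq_or_ne (ψ r u) 0 with h₀ | h₀
    · rw [h₀, smul_zero, smul_zero]
    · exact (hstr w _ hcrit h₀).2
  have hu_eq : u = (X (r + 1) : YPoly) • ψ r u - (X r : YPoly) • ψ r u := by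
    have hleft := h.psi_X_smul hr hu.mem (j := m) (.inr ⟨by omega, by omega⟩)
    rw [(hstr w u hu hu₀).2, h.psi_X_right_smul hr hu.mem heq,
      Equiv.swap_apply_of_ne_of_ne (by omega) (by omega), hX] at hleft
    rw [← hleft, add_sub_cancel_left]
  have hpsi : ψ r u = 0 := by
    have hdouble := congrArg (ψ r) hu_eq
    rw [map_sub, h.psi_X_right_smul hr hcrit.mem heq, h.psi_X_left_smul hr hcrit.mem heq,
      h.psi_psi hr hu.mem heq, smul_zero, smul_zero, zero_add, zero_sub, sub_neg_eq_add] at hdouble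
    exact left_eq_add.mp hdouble
  rw [hpsi, smul_zero, smul_zero, sub_zero] at hu_eq
  exact hu₀ hu_eq

lemma psi_critical_eq_zero_of_string (h : IsLinearKLRModule n κ W ψ) (hm : m < n) (hrm : r + 1 < m)
    {i : ℕ} (hstr : CriticalString κ W i m) (hu : IsCritical κ W m w u) {j : ℕ} (hij : i ≤ j)
    (hjm : j ≤ m) (hj : w (adjSwap r j) ≠ w m + j - m) : ψ r u = 0 := by
  by_contra h₀
  have hletter := (hstr _ _ (h.isCritical_psi (by omega) hrm hu) h₀).1 j hij hjm
  rw [comp_adjSwap_of_gt hrm] at hletter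
  exact hj hletter

lemma critical_eq_zero_of_braid (h : IsLinearKLRModule n κ W ψ) (hm : m < n) (hrm : r + 1 < m)
    (hB : DegreeBound κ W m) (hstr : CriticalString κ W (r + 1) m) (hu : IsCritical κ W m w u)
    (hword : IsString w (r + 1) m) (hpsi : ψ r u = 0) (hadj : w r = w (r + 1) + 1) : u = 0 := by
  have hletter₁ := hword (r + 1) le_rfl hrm.le
  have hletter₂ := hword (r + 2) (by omega) hrm
  push_cast at hletter₁ hletter₂
  have hpsi' : ψ (r + 1) u = 0 := by
    rcases eq_or_lt_of_le (show r + 2 ≤ m from hrm) with rfl | hlt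
    · have hne : w (r + 1) ≠ w (r + 2) := by omega
      have hne' : w (r + 1) ≠ w (r + 2) + 1 := by omega
      exact h.psi_critical_eq_zero hm hB hu hne hne'
    · refine h.psi_critical_eq_zero_of_string hm hlt hstr hu le_rfl hrm.le ?_
      rw [Equiv.swap_apply_left, hletter₂]
      push_cast
      omega
  exact h.eq_zero_of_braid (by omega) hu.mem (by omega) (.inl hadj) hpsi hpsi'

lemma criticalString_of_succ (h : IsLinearKLRModule n κ W ψ) (hm : m < n) (hrm : r + 1 < m)
    (hB : DegreeBound κ W m) (hstr : CriticalString κ W (r + 1) m) : CriticalString κ W r m := by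
  intro w u hu hu₀
  have hr : r + 1 < n := by omega
  obtain ⟨hword, hX⟩ := hstr w u hu hu₀
  have hne : w r ≠ w (r + 1) := fun heq => hu₀ (h.critical_eq_zero_of_repeat hm hrm hstr hu heq)
  have hpsi : ψ r u = 0 := by
    refine h.psi_critical_eq_zero_of_string hm hrm hstr hu le_rfl hrm.le ?_
    rwa [Equiv.swap_apply_right, ← hword (r + 1) le_rfl hrm.le]
  have hne' : w r ≠ w (r + 1) + 1 := fun hadj =>
    hu₀ (h.critical_eq_zero_of_braid hm hrm hB hstr hu hword hpsi hadj)
  have hadj : w (r + 1) = w r + 1 := by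
    by_contra hfar
    exact hu₀ (h.eq_zero_of_far hr hu.mem hne hne' hfar hpsi)
  exact ⟨hword.cons (by omega) hrm.le,
    hX.trans (h.X_smul_eq_of_adjacent hr hu.mem (.inr hadj) hpsi)⟩

lemma criticalString_zero (h : IsLinearKLRModule n κ W ψ) (hm : m + 1 < n)
    (hB : ∀ j ≤ m + 1, DegreeBound κ W j) : CriticalString κ W 0 (m + 1) := by
  refine Nat.decreasingInduction' (P := fun i => CriticalString κ W i (m + 1))
    (fun i hi _ hstr => ?_) m.zero_le fun w u hu hu₀ => ?_
  · exact h.criticalString_of_succ hm (by omega) (hB _ le_rfl) hstr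
  · exact h.isString_critical_base hm (hB m (by omega)) (hB _ le_rfl) hu hu₀

lemma X_pow_smul_eq_zero_of_far (h : IsLinearKLRModule n κ W ψ) (hm : m < n) (hv : v ∈ W w)
    (hfar : ∀ j < m, w j ≠ w m ∧ w j ≠ w m + 1 ∧ w m ≠ w j + 1) :
    (X m ^ chargesEq κ (w m) : YPoly) • v = 0 := by
  induction m generalizing w v with
  | zero => exact h.cyc hm hv
  | succ m ih =>
    obtain ⟨hne, hne', hne''⟩ := hfar m m.lt_succ_self
    refine h.eq_zero_of_far hm ((W w).smul_mem _ hv) hne hne' hne'' ?_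
    rw [h.psi_smul_of_ne hm hv hne, map_pow, MvPolynomial.rename_X, Equiv.swap_apply_right,
      ← comp_adjSwap_left (w := w) (r := m)]
    refine ih (by omega) (h.psi_mem hm hv) fun j hj => ?_
    rw [comp_adjSwap_left, comp_adjSwap_of_lt hj]
    exact hfar j (by omega)

lemma X_sub_X_mul_X_pow_smul_eq_zero (h : IsLinearKLRModule n κ W ψ) (hm : m + 1 < n)
    (hv : v ∈ W w) (hword : IsString w 0 (m + 1)) :
    ((X (m + 1) - X m) * X (m + 1) ^ chargesEq κ (w (m + 1)) : YPoly) • v = 0 := by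
  have hadj := hword m (by omega) (by omega)
  push_cast at hadj
  rw [mul_smul, sub_smul, sub_eq_zero]
  refine h.X_smul_eq_of_adjacent hm ((W w).smul_mem _ hv) (.inr (by omega)) ?_
  rw [h.psi_smul_of_ne hm hv (by omega), map_pow, MvPolynomial.rename_X, Equiv.swap_apply_right,
    ← comp_adjSwap_left (w := w) (r := m)]
  refine h.X_pow_smul_eq_zero_of_far (by omega) (h.psi_mem hm hv) fun j hj => ?_
  have hletter := hword j (by omega) (by omega)
  rw [comp_adjSwap_left, comp_adjSwap_of_lt hj]
  push_cast at hletter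
  omega

lemma critical_eq_zero_of_string (h : IsLinearKLRModule n κ W ψ) (hm : m + 1 < n)
    (hB : DegreeBound κ W (m + 1)) (hu : IsCritical κ W (m + 1) w u)
    (hword : IsString w 0 (m + 1)) : u = 0 := by
  obtain ⟨k, hk, v, hv, rfl⟩ := hu
  set N := chargesEq κ (w (m + 1))
  set q := chargesLE κ (w (m + 1) - 1)
  have hk' : k = q + N := by
    rw [hword.wordDegree_eq_zero le_rfl (by omega)] at hk
    have := chargesLE_sub_one_add κ (w (m + 1))
    omega
  have hcoeff : PowerSeries.coeff k (wordSeries (w (m + 1)) w (m + 2)) =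
      (X (m + 1) ^ (q + N) : YPoly) := by
    rw [wordSeries_succ, hword.wordSeries_eq_one le_rfl (by omega), one_mul, localFactor_self,
      geomSeries, PowerSeries.coeff_mk, hk']
  obtain ⟨p, hp⟩ := sub_dvd_pow_sub_pow (X (m + 1) : YPoly) (X m) q
  have hsplit : (X (m + 1) ^ (q + N) : YPoly) =
      p * ((X (m + 1) - X m) * X (m + 1) ^ N) + X (m + 1) ^ N * X m ^ q := by
    rw [pow_add]
    linear_combination X (m + 1) ^ N * hp
  rw [hcoeff, hsplit, add_smul, mul_smul, h.X_sub_X_mul_X_pow_smul_eq_zero hm hv hword, smul_zero,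
    mul_smul, hB.X_pow_chargesLE_smul_eq_zero hv hword, smul_zero, add_zero]

lemma critical_eq_zero (h : IsLinearKLRModule n κ W ψ) (hm : m < n)
    (hB : ∀ j ≤ m, DegreeBound κ W j) (hu : IsCritical κ W m w u) : u = 0 := by
  cases m with
  | zero =>
    obtain ⟨k, hk, v, hv, rfl⟩ := hu
    have hk' : k = chargesLE κ (w 0) := by
      rw [wordDegree, Finset.sum_range_zero] at hk
      omega
    rw [wordSeries_succ, wordSeries, Finset.prod_range_zero, one_mul, localFactor_self,
      geomSeries, PowerSeries.coeff_mk, hk', ← chargesLE_sub_one_add, pow_add, mul_smul,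
      h.cyc hm hv, smul_zero]
  | succ m =>
    by_contra hu₀
    exact hu₀ (h.critical_eq_zero_of_string hm (hB _ le_rfl) hu
      (h.criticalString_zero hm hB w u hu hu₀).1)

lemma degreeBound_succ (h : IsLinearKLRModule n κ W ψ) (hm : m < n)
    (hB : ∀ j ≤ m, DegreeBound κ W j) : DegreeBound κ W (m + 1) := by
  intro w c
  rw [wordSeries_succ, wordDegree_succ, ← add_assoc]
  rcases eq_or_ne (w m) c with rfl | hne
  · rw [localFactor_self, localDegree_self]
    refine (hB m le_rfl w _).mul_geomSeries fun k hk v hv => ?_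
    refine h.critical_eq_zero hm hB ⟨k, hk, v, hv, ?_⟩
    rw [wordSeries_succ, localFactor_self]
  · exact (hB m le_rfl w c).mul (hasDegreeLEOn_localFactor hne _ _)

lemma degreeBound (h : IsLinearKLRModule n κ W ψ) (hm : m ≤ n) : DegreeBound κ W m := by
  induction m using Nat.strong_induction_on with
  | _ m ih =>
    cases m with
    | zero => exact fun w c => .one (by rw [wordDegree, Finset.range_zero]; simp)
    | succ m => exact h.degreeBound_succ hm fun j hj => ih j (by omega) (by omega)

theorem X_pow_card_smul_eq_zero (h : IsLinearKLRModule n κ W ψ) (hm : m < n) (hv : v ∈ W w) :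
    (X m ^ Fintype.card ι : YPoly) • v = 0 := by
  have hreflect := h.neg.degreeBound hm.le (-w) (-(w m + 1))
  rw [neg_neg] at hreflect
  have hdeg := hreflect.mul (h.degreeBound (m := m + 1) hm w (w m)) (Fintype.card ι)
  have hcharges := chargesLE_add_chargesLE_reflect κ (w m)
  have hword := wordDegree_reflect_add w m
  rw [wordSeries_reflect_mul, geomSeries, PowerSeries.coeff_mk] at hdeg
  exact hdeg (by omega) v hv

end IsLinearKLRModule

end LinearKLR

section Weights

variable {R : Type*} [CommRing R] {n e ℓ : ℕ} [NeZero e] {κ : ℕ → ℤ}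

/-- The vector `x` of the left regular module has weight `i`, that is, `e(i) x = x`. -/
def HasWeight (i : Fin n → ZMod e) (x : KLR R n e ℓ κ) : Prop := KeGen R n e ℓ κ i * x = x

lemma hasWeight_zero (i : Fin n → ZMod e) : HasWeight i (0 : KLR R n e ℓ κ) := mul_zero _

lemma hasWeight_KeGen (i : Fin n → ZMod e) : HasWeight i (KeGen R n e ℓ κ i) := by
  have hrel := RingQuot.mkAlgHom_rel R (KLRRel.idem (R := R) (ℓ := ℓ) (κ := κ) i)
  rwa [map_mul] at hrel

namespace HasWeight

variable {i : Fin n → ZMod e} {x : KLR R n e ℓ κ}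

lemma mkAlgHom_mul_eq (hx : HasWeight i x) {a b : FreeAlgebra R (KLRGen n e)}
    (hab : KLRRel R n e ℓ κ (a * kE R i) (b * kE R i)) :
    RingQuot.mkAlgHom R (KLRRel R n e ℓ κ) a * x =
      RingQuot.mkAlgHom R (KLRRel R n e ℓ κ) b * x := by
  have hrel := RingQuot.mkAlgHom_rel R hab
  rw [map_mul, map_mul] at hrel
  have hrel_mul := congrArg (· * x) hrel
  simp only [mul_assoc] at hrel_mul
  change _ * (KeGen R n e ℓ κ i * x) = _ * (KeGen R n e ℓ κ i * x) at hrel_mul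
  rwa [hx] at hrel_mul

lemma KyGen_mul (hx : HasWeight i x) (k : Fin n) : HasWeight i (KyGen R n e ℓ κ k * x) := by
  have hrel := RingQuot.mkAlgHom_rel R (KLRRel.yE (R := R) (ℓ := ℓ) (κ := κ) k i)
  rw [map_mul, map_mul] at hrel
  change KyGen R n e ℓ κ k * KeGen R n e ℓ κ i = KeGen R n e ℓ κ i * KyGen R n e ℓ κ k at hrel
  rw [HasWeight, ← mul_assoc, ← hrel, mul_assoc, hx]

lemma KpsiGen_mul (hx : HasWeight i x) (r : Fin (n - 1)) :
    HasWeight (swapSeq i r) (KpsiGen R n e ℓ κ r * x) := by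
  have hrel := RingQuot.mkAlgHom_rel R (KLRRel.psiE (R := R) (ℓ := ℓ) (κ := κ) r i)
  rw [map_mul, map_mul] at hrel
  change KpsiGen R n e ℓ κ r * KeGen R n e ℓ κ i =
    KeGen R n e ℓ κ (swapSeq i r) * KpsiGen R n e ℓ κ r at hrel
  rw [HasWeight, ← mul_assoc, ← hrel, mul_assoc, hx]

lemma KyGen_zero_pow_mul_eq_zero (hx : HasWeight i x) (hn : 0 < n) :
    KyGen R n e ℓ κ ⟨0, hn⟩ ^
      ((Finset.range ℓ).filter fun l => (κ l : ZMod e) = i ⟨0, hn⟩).card * x = 0 := by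
  have hcyc := hx.mkAlgHom_mul_eq (a := kY R ⟨0, hn⟩ ^ _) (b := 0) (by
    rw [zero_mul]; exact KLRRel.cyc hn i)
  rwa [map_pow, map_zero, zero_mul] at hcyc

variable {r : Fin (n - 1)}

lemma KpsiGen_mul_KyGen_right_of_eq (hx : HasWeight i x) (hi : i (pL r) = i (pR r)) :
    KpsiGen R n e ℓ κ r * (KyGen R n e ℓ κ (pR r) * x) =
      KyGen R n e ℓ κ (pL r) * (KpsiGen R n e ℓ κ r * x) + x := by
  simpa only [map_mul, map_add, map_one, add_mul, one_mul, mul_assoc, KyGen, KpsiGen] using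
    hx.mkAlgHom_mul_eq (.psiyEq r i hi)

lemma KpsiGen_mul_KyGen_left_of_eq (hx : HasWeight i x) (hi : i (pL r) = i (pR r)) :
    KpsiGen R n e ℓ κ r * (KyGen R n e ℓ κ (pL r) * x) =
      KyGen R n e ℓ κ (pR r) * (KpsiGen R n e ℓ κ r * x) - x := by
  refine eq_sub_of_add_eq (Eq.symm ?_)
  simpa only [map_mul, map_add, map_one, add_mul, one_mul, mul_assoc, KyGen, KpsiGen] using
    hx.mkAlgHom_mul_eq (.ypsiEq r i hi)

lemma KpsiGen_mul_KyGen_right_of_ne (hx : HasWeight i x) (hi : i (pL r) ≠ i (pR r)) :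
    KpsiGen R n e ℓ κ r * (KyGen R n e ℓ κ (pR r) * x) =
      KyGen R n e ℓ κ (pL r) * (KpsiGen R n e ℓ κ r * x) := by
  simpa only [map_mul, mul_assoc, KyGen, KpsiGen] using hx.mkAlgHom_mul_eq (.psiyNe r i hi)

lemma KpsiGen_mul_KyGen_left_of_ne (hx : HasWeight i x) (hi : i (pL r) ≠ i (pR r)) :
    KpsiGen R n e ℓ κ r * (KyGen R n e ℓ κ (pL r) * x) =
      KyGen R n e ℓ κ (pR r) * (KpsiGen R n e ℓ κ r * x) := by
  simpa only [map_mul, mul_assoc, KyGen, KpsiGen] using (hx.mkAlgHom_mul_eq (.ypsiNe r i hi)).symm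

lemma KpsiGen_mul_KpsiGen_mul_of_eq (hx : HasWeight i x) (hi : i (pL r) = i (pR r)) :
    KpsiGen R n e ℓ κ r * (KpsiGen R n e ℓ κ r * x) = 0 := by
  have hquad := hx.mkAlgHom_mul_eq (a := kPsi R r ^ 2) (b := 0) (by
    rw [zero_mul]; exact KLRRel.quadEq r i hi)
  rwa [map_zero, zero_mul, map_pow, sq, mul_assoc] at hquad

lemma eq_zero_of_far (hx : HasWeight i x) (hne : i (pL r) ≠ i (pR r))
    (hR : i (pR r) ≠ i (pL r) + 1) (hL : i (pL r) ≠ i (pR r) + 1)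
    (hpsi : KpsiGen R n e ℓ κ r * x = 0) : x = 0 := by
  have hquad := hx.mkAlgHom_mul_eq (a := kPsi R r ^ 2) (b := 1) (by
    rw [one_mul]; exact KLRRel.quadNone r i hne hR hL)
  rw [map_one, one_mul, map_pow, sq, mul_assoc] at hquad
  rw [← hquad]
  exact (congrArg (_ * ·) hpsi).trans (mul_zero _)

lemma KyGen_mul_eq_of_adjacent (hx : HasWeight i x)
    (hadj : i (pL r) = i (pR r) + 1 ∧ i (pR r) ≠ i (pL r) + 1 ∨
      i (pR r) = i (pL r) + 1 ∧ i (pL r) ≠ i (pR r) + 1)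
    (hpsi : KpsiGen R n e ℓ κ r * x = 0) :
    KyGen R n e ℓ κ (pR r) * x = KyGen R n e ℓ κ (pL r) * x := by
  have hsq : RingQuot.mkAlgHom R (KLRRel R n e ℓ κ) (kPsi R r ^ 2) * x = 0 := by
    rw [map_pow, sq, mul_assoc]
    exact (congrArg (_ * ·) hpsi).trans (mul_zero _)
  rcases hadj with ⟨hL, hR⟩ | ⟨hR, hL⟩
  · have hquad := hx.mkAlgHom_mul_eq (.quadL r i hL hR)
    rw [hsq, map_sub, sub_mul] at hquad
    exact sub_eq_zero.mp hquad.symm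
  · have hquad := hx.mkAlgHom_mul_eq (.quadR r i hR hL)
    rw [hsq, map_sub, sub_mul] at hquad
    exact (sub_eq_zero.mp hquad.symm).symm

lemma eq_zero_of_braid (hx : HasWeight i x) (hr : r.1 + 1 < n - 1) (h₀ : i (pM r hr) = i (pL r))
    (hadj : i (pL r) = i (pR r) + 1 ∧ i (pR r) ≠ i (pL r) + 1 ∨
      i (pR r) = i (pL r) + 1 ∧ i (pL r) ≠ i (pR r) + 1)
    (hpsi : KpsiGen R n e ℓ κ r * x = 0) (hpsi' : KpsiGen R n e ℓ κ ⟨r.1 + 1, hr⟩ * x = 0) :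
    x = 0 := by
  have hleft : RingQuot.mkAlgHom R (KLRRel R n e ℓ κ)
      (kPsi R r * kPsi R ⟨r.1 + 1, hr⟩ * kPsi R r) * x = 0 := by
    rw [map_mul, mul_assoc]
    exact (congrArg (_ * ·) hpsi).trans (mul_zero _)
  have hright : RingQuot.mkAlgHom R (KLRRel R n e ℓ κ)
      (kPsi R ⟨r.1 + 1, hr⟩ * kPsi R r * kPsi R ⟨r.1 + 1, hr⟩) * x = 0 := by
    rw [map_mul, mul_assoc]
    exact (congrArg (_ * ·) hpsi').trans (mul_zero _)
  rcases hadj with ⟨hL, hR⟩ | ⟨hR, hL⟩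
  · have hbraid := hx.mkAlgHom_mul_eq (.braidL r hr i h₀ hL hR)
    rw [hleft, map_add, add_mul, hright, zero_add, map_one, one_mul] at hbraid
    exact hbraid.symm
  · have hbraid := hx.mkAlgHom_mul_eq (.braidR r hr i h₀ hR hL)
    rw [hleft, map_sub, sub_mul, hright, zero_sub, map_one, one_mul] at hbraid
    exact neg_eq_zero.mp hbraid.symm

end HasWeight

end Weights

section ReducedWords

variable (n e : ℕ)

/-- The first `n` letters of `w` are the representatives in `1, …, e - 1` of nonzero residues. -/
def IsReduced (w : ℕ → ℤ) : Prop := ∀ j < n, 0 < w j ∧ w j < e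

/-- The residue sequence with lift `w`, where residues are measured from `t`. -/
def residueWord (t : ZMod e) (w : ℕ → ℤ) : Fin n → ZMod e := fun j => t + (w j : ZMod e)

variable {n e} {t : ZMod e} {w : ℕ → ℤ}

lemma IsReduced.comp_adjSwap (hw : IsReduced n e w) {r : ℕ} (hr : r + 1 < n) :
    IsReduced n e (w ∘ adjSwap r) := by
  intro j hj
  refine hw _ ?_
  rw [Equiv.swap_apply_def]
  split_ifs <;> omega

lemma IsReduced.residueWord_eq_iff (hw : IsReduced n e w) (j k : Fin n) :
    residueWord n e t w j = residueWord n e t w k ↔ w j = w k := by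
  have hj := hw j j.2
  have hk := hw k k.2
  rw [residueWord, residueWord, add_right_inj, ZMod.intCast_eq_intCast_iff_dvd_sub]
  refine ⟨fun hdvd => ?_, fun heq => by rw [heq, sub_self]; exact dvd_zero _⟩
  have := Int.eq_zero_of_abs_lt_dvd hdvd (abs_lt.mpr ⟨by omega, by omega⟩)
  omega

lemma IsReduced.residueWord_eq_add_one_iff (hw : IsReduced n e w) (j k : Fin n) :
    residueWord n e t w j = residueWord n e t w k + 1 ↔ w j = w k + 1 := by
  have hj := hw j j.2
  have hk := hw k k.2
  rw [residueWord, residueWord, add_assoc, add_right_inj, ← Int.cast_one, ← Int.cast_add,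
    ZMod.intCast_eq_intCast_iff_dvd_sub]
  refine ⟨fun hdvd => ?_, fun heq => by rw [heq, sub_self]; exact dvd_zero _⟩
  have := Int.eq_zero_of_abs_lt_dvd hdvd (abs_lt.mpr ⟨by omega, by omega⟩)
  omega

lemma IsReduced.residueWord_adjacent (hw : IsReduced n e w) {j k : Fin n}
    (hadj : w j = w k + 1 ∨ w k = w j + 1) :
    residueWord n e t w j = residueWord n e t w k + 1 ∧
        residueWord n e t w k ≠ residueWord n e t w j + 1 ∨
      residueWord n e t w k = residueWord n e t w j + 1 ∧
        residueWord n e t w j ≠ residueWord n e t w k + 1 := by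
  simp only [ne_eq, hw.residueWord_eq_add_one_iff]
  omega

lemma swapSeq_residueWord (r : Fin (n - 1)) :
    swapSeq (residueWord n e t w) r = residueWord n e t (w ∘ adjSwap r) := by
  funext k
  simp only [swapSeq, residueWord, Function.comp_apply, Equiv.swap_apply_def, Fin.ext_iff, pL, pR]
  split_ifs <;> rfl

lemma exists_residueWord_eq [NeZero e] {i : Fin n → ZMod e} (ht : ∀ j, i j ≠ t) :
    ∃ w, IsReduced n e w ∧ residueWord n e t w = i := by
  refine ⟨fun j => if h : j < n then ((i ⟨j, h⟩ - t).val : ℤ) else 0, fun j hj => ?_, ?_⟩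
  · have hpos := ZMod.val_pos.mpr (sub_ne_zero.mpr (ht ⟨j, hj⟩))
    have hlt := ZMod.val_lt (i ⟨j, hj⟩ - t)
    simp only [dif_pos hj]
    omega
  · funext j
    rw [residueWord, dif_pos j.2, Int.cast_natCast, ZMod.natCast_zmod_val, add_sub_cancel]

end ReducedWords

section DotAction

open MvPolynomial (X)
open scoped IsMulCommutative

variable (R : Type*) [CommRing R] (n e ℓ : ℕ) [NeZero e] (κ : ℕ → ℤ)

/-- The dot `y_j` for `j < n`, and `0` on the strands that do not exist. -/
noncomputable def dot (j : ℕ) : KLR R n e ℓ κ :=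
  if h : j < n then KyGen R n e ℓ κ ⟨j, h⟩ else 0

variable {R n e ℓ κ} in
lemma dot_of_lt {j : ℕ} (hj : j < n) : dot R n e ℓ κ j = KyGen R n e ℓ κ ⟨j, hj⟩ := dif_pos hj

lemma dot_mul_comm (j k : ℕ) :
    dot R n e ℓ κ j * dot R n e ℓ κ k = dot R n e ℓ κ k * dot R n e ℓ κ j := by
  unfold dot
  split_ifs with hj hk
  · have hrel := RingQuot.mkAlgHom_rel R
      (KLRRel.yy (R := R) (e := e) (ℓ := ℓ) (κ := κ) ⟨j, hj⟩ ⟨k, hk⟩)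
    rwa [map_mul, map_mul] at hrel
  all_goals simp only [mul_zero, zero_mul]

lemma isMulCommutative_dots :
    IsMulCommutative (Algebra.adjoin R (Set.range (dot R n e ℓ κ))) :=
  Algebra.isMulCommutative_adjoin R (by
    rintro _ ⟨j, rfl⟩ _ ⟨k, rfl⟩
    exact dot_mul_comm R n e ℓ κ j k)

attribute [local instance] isMulCommutative_dots

/-- Evaluation of polynomials at the dots. -/
noncomputable def dotHom : YPoly →+* KLR R n e ℓ κ :=
  (Algebra.adjoin R (Set.range (dot R n e ℓ κ))).val.toRingHom.comp
    (MvPolynomial.eval₂Hom ((algebraMap R _).comp (Int.castRingHom R)) fun j =>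
      ⟨dot R n e ℓ κ j, Algebra.subset_adjoin ⟨j, rfl⟩⟩)

lemma dotHom_X (j : ℕ) : dotHom R n e ℓ κ (X j) = dot R n e ℓ κ j :=
  congrArg Subtype.val (MvPolynomial.eval₂Hom_X' _ _ j)

/-- Polynomials in the dots act on the quiver Hecke algebra by left multiplication. -/
@[reducible]
noncomputable def dotModule : Module YPoly (KLR R n e ℓ κ) :=
  Module.compHom (KLR R n e ℓ κ) (dotHom R n e ℓ κ)

attribute [local instance] dotModule

variable {R n e ℓ κ}

lemma X_smul_eq_dot_mul (j : ℕ) (x : KLR R n e ℓ κ) :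
    (X j : YPoly) • x = dot R n e ℓ κ j * x :=
  congrArg (· * x) (dotHom_X R n e ℓ κ j)

lemma X_smul_of_lt {j : ℕ} (hj : j < n) (x : KLR R n e ℓ κ) :
    (X j : YPoly) • x = KyGen R n e ℓ κ ⟨j, hj⟩ * x := by
  rw [X_smul_eq_dot_mul, dot_of_lt]

lemma X_pow_smul_of_lt {j : ℕ} (hj : j < n) (k : ℕ) (x : KLR R n e ℓ κ) :
    (X j ^ k : YPoly) • x = KyGen R n e ℓ κ ⟨j, hj⟩ ^ k * x := by
  induction k with
  | zero => rw [pow_zero, pow_zero, one_smul, one_mul]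
  | succ k ih => rw [pow_succ', pow_succ', mul_smul, ih, X_smul_of_lt hj, mul_assoc]

lemma KpsiGen_mul_X_smul_of_far (r : Fin (n - 1)) {j : ℕ} (hj : j ≠ r.1 ∧ j ≠ r.1 + 1)
    (x : KLR R n e ℓ κ) :
    KpsiGen R n e ℓ κ r * ((X j : YPoly) • x) = (X j : YPoly) • (KpsiGen R n e ℓ κ r * x) := by
  rw [X_smul_eq_dot_mul, X_smul_eq_dot_mul, dot]
  split_ifs with hjn
  · have hrel := RingQuot.mkAlgHom_rel R
      (KLRRel.psiyFar (R := R) (e := e) (ℓ := ℓ) (κ := κ) r ⟨j, hjn⟩ hj)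
    rw [map_mul, map_mul] at hrel
    rw [← mul_assoc, ← mul_assoc]
    exact congrArg (· * x) hrel
  · rw [zero_mul, zero_mul, mul_zero]

lemma HasWeight.smul {i : Fin n → ZMod e} {x : KLR R n e ℓ κ} (hx : HasWeight i x) (f : YPoly) :
    HasWeight i (f • x) := by
  induction f using MvPolynomial.induction_on with
  | C a =>
    rw [HasWeight, eq_intCast MvPolynomial.C a, Int.cast_smul_eq_zsmul, mul_smul_comm, hx]
  | add f g hf hg => rw [HasWeight, add_smul, mul_add, hf, hg]
  | mul_X f j hf =>
    rw [mul_comm, mul_smul, X_smul_eq_dot_mul, dot]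
    split_ifs with hj
    · exact hf.KyGen_mul _
    · rw [zero_mul]
      exact hasWeight_zero i

/-- The weight space `e(i) R_n^Λ` of the left regular module. -/
def weightSpace (i : Fin n → ZMod e) : Submodule YPoly (KLR R n e ℓ κ) where
  carrier := {x | HasWeight i x}
  add_mem' hx hy := (mul_add _ _ _).trans (congrArg₂ (· + ·) hx hy)
  zero_mem' := hasWeight_zero i
  smul_mem' f _ hx := hx.smul f

variable {t : ZMod e} {w : ℕ → ℤ}

variable (R ℓ κ) in
/-- The weight space of the residue sequence with lift `w`. It is `0` unless `w` is reduced, so that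
every residue sequence avoiding `t` is lifted exactly once. -/
noncomputable def liftedWeightSpace (t : ZMod e) (w : ℕ → ℤ) : Submodule YPoly (KLR R n e ℓ κ) :=
  if IsReduced n e w then weightSpace (residueWord n e t w) else ⊥

lemma mem_liftedWeightSpace {v : KLR R n e ℓ κ} :
    v ∈ liftedWeightSpace R ℓ κ t w ↔
      v = 0 ∨ IsReduced n e w ∧ HasWeight (residueWord n e t w) v := by
  rw [liftedWeightSpace]
  split_ifs with hw
  · refine ⟨fun hv => .inr ⟨hw, hv⟩, ?_⟩
    rintro (rfl | ⟨_, hv⟩)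
    exacts [zero_mem _, hv]
  · rw [Submodule.mem_bot]
    tauto

variable (R n e ℓ κ) in
/-- Left multiplication by the crossing `ψ_r`, and `0` when there is no such crossing. -/
noncomputable def crossing (r : ℕ) : KLR R n e ℓ κ →+ KLR R n e ℓ κ :=
  if h : r < n - 1 then AddMonoidHom.mulLeft (KpsiGen R n e ℓ κ ⟨r, h⟩) else 0

lemma crossing_apply {r : ℕ} (hr : r < n - 1) (v : KLR R n e ℓ κ) :
    crossing R n e ℓ κ r v = KpsiGen R n e ℓ κ ⟨r, hr⟩ * v := by
  rw [crossing, dif_pos hr, AddMonoidHom.coe_mulLeft]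

variable (ℓ κ) in
/-- The multicharge, with its residues measured from `t` and lifted to `0, …, e - 1`. -/
def liftedCharge (t : ZMod e) (l : Fin ℓ) : ℤ := ((κ l - t : ZMod e).val : ℤ)

lemma chargesEq_liftedCharge (hw : IsReduced n e w) (hn : 0 < n) :
    chargesEq (liftedCharge ℓ κ t) (w 0) =
      ((Finset.range ℓ).filter fun l => (κ l : ZMod e) = residueWord n e t w ⟨0, hn⟩).card := by
  have hiff (l : ℕ) : ((κ l - t : ZMod e).val : ℤ) = w 0 ↔
      (κ l : ZMod e) = residueWord n e t w ⟨0, hn⟩ := by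
    have h₀ := hw 0 hn
    rw [residueWord, ← sub_eq_iff_eq_add']
    refine ⟨fun h => ?_, fun h => ?_⟩
    · rw [← h, Int.cast_natCast, ZMod.natCast_zmod_val]
    · rw [h, ZMod.val_intCast, Int.emod_eq_of_lt h₀.1.le h₀.2]
  simp only [chargesEq, liftedCharge, hiff, Finset.card_filter]
  exact (Finset.sum_range fun l =>
    if (κ l : ZMod e) = residueWord n e t w ⟨0, hn⟩ then 1 else 0).symm

section LiftedWeightSpace

variable {r : ℕ} {v : KLR R n e ℓ κ}

lemma crossing_mem (hr : r + 1 < n) (hv : v ∈ liftedWeightSpace R ℓ κ t w) :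
    crossing R n e ℓ κ r v ∈ liftedWeightSpace R ℓ κ t (w ∘ adjSwap r) := by
  rcases mem_liftedWeightSpace.mp hv with rfl | ⟨hw, hx⟩
  · rw [map_zero]
    exact zero_mem _
  · rw [crossing_apply (by omega)]
    refine mem_liftedWeightSpace.mpr (.inr ⟨hw.comp_adjSwap hr, ?_⟩)
    rw [← swapSeq_residueWord ⟨r, by omega⟩]
    exact hx.KpsiGen_mul _

lemma crossing_X_smul {j : ℕ} (hr : r + 1 < n) (hv : v ∈ liftedWeightSpace R ℓ κ t w)
    (hj : w r ≠ w (r + 1) ∨ j ≠ r ∧ j ≠ r + 1) :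
    crossing R n e ℓ κ r ((X j : YPoly) • v) =
      (X (adjSwap r j) : YPoly) • crossing R n e ℓ κ r v := by
  have hr' : r < n - 1 := by omega
  rcases mem_liftedWeightSpace.mp hv with rfl | ⟨hw, hx⟩
  · simp only [smul_zero, map_zero]
  rw [crossing_apply hr', crossing_apply hr']
  by_cases hfar : j ≠ r ∧ j ≠ r + 1
  · rw [Equiv.swap_apply_of_ne_of_ne hfar.1 hfar.2, KpsiGen_mul_X_smul_of_far ⟨r, hr'⟩ hfar]
  have hne := (hw.residueWord_eq_iff (t := t) (pL ⟨r, hr'⟩) (pR ⟨r, hr'⟩)).not.mpr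
    (hj.resolve_right hfar)
  obtain rfl | rfl : j = r ∨ j = r + 1 := by omega
  · rw [Equiv.swap_apply_left, X_smul_of_lt hr, X_smul_of_lt (by omega)]
    exact hx.KpsiGen_mul_KyGen_left_of_ne hne
  · rw [Equiv.swap_apply_right, X_smul_of_lt hr, X_smul_of_lt (by omega)]
    exact hx.KpsiGen_mul_KyGen_right_of_ne hne

lemma crossing_X_left_smul (hr : r + 1 < n) (hv : v ∈ liftedWeightSpace R ℓ κ t w)
    (heq : w r = w (r + 1)) :
    crossing R n e ℓ κ r ((X r : YPoly) • v) =
      (X (r + 1) : YPoly) • crossing R n e ℓ κ r v - v := by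
  rcases mem_liftedWeightSpace.mp hv with rfl | ⟨hw, hx⟩
  · simp only [smul_zero, map_zero, sub_zero]
  rw [crossing_apply (by omega), crossing_apply (by omega), X_smul_of_lt hr,
    X_smul_of_lt (by omega)]
  exact hx.KpsiGen_mul_KyGen_left_of_eq ((hw.residueWord_eq_iff _ _).mpr heq)

lemma crossing_X_right_smul (hr : r + 1 < n) (hv : v ∈ liftedWeightSpace R ℓ κ t w)
    (heq : w r = w (r + 1)) :
    crossing R n e ℓ κ r ((X (r + 1) : YPoly) • v) =
      (X r : YPoly) • crossing R n e ℓ κ r v + v := by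
  rcases mem_liftedWeightSpace.mp hv with rfl | ⟨hw, hx⟩
  · simp only [smul_zero, map_zero, add_zero]
  rw [crossing_apply (by omega), crossing_apply (by omega), X_smul_of_lt hr,
    X_smul_of_lt (by omega)]
  exact hx.KpsiGen_mul_KyGen_right_of_eq ((hw.residueWord_eq_iff _ _).mpr heq)

lemma crossing_crossing (hr : r + 1 < n) (hv : v ∈ liftedWeightSpace R ℓ κ t w)
    (heq : w r = w (r + 1)) :
    crossing R n e ℓ κ r (crossing R n e ℓ κ r v) = 0 := by
  rcases mem_liftedWeightSpace.mp hv with rfl | ⟨hw, hx⟩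
  · simp only [map_zero]
  rw [crossing_apply (by omega), crossing_apply (by omega)]
  exact hx.KpsiGen_mul_KpsiGen_mul_of_eq ((hw.residueWord_eq_iff _ _).mpr heq)

lemma eq_zero_of_crossing_eq_zero_of_far (hr : r + 1 < n)
    (hv : v ∈ liftedWeightSpace R ℓ κ t w) (hne : w r ≠ w (r + 1)) (hL : w r ≠ w (r + 1) + 1)
    (hR : w (r + 1) ≠ w r + 1) (hpsi : crossing R n e ℓ κ r v = 0) : v = 0 := by
  rcases mem_liftedWeightSpace.mp hv with rfl | ⟨hw, hx⟩
  · rfl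
  rw [crossing_apply (by omega)] at hpsi
  exact hx.eq_zero_of_far (r := ⟨r, by omega⟩) ((hw.residueWord_eq_iff _ _).not.mpr hne)
    ((hw.residueWord_eq_add_one_iff _ _).not.mpr hR)
    ((hw.residueWord_eq_add_one_iff _ _).not.mpr hL) hpsi

lemma X_smul_eq_of_crossing_eq_zero (hr : r + 1 < n) (hv : v ∈ liftedWeightSpace R ℓ κ t w)
    (hadj : w r = w (r + 1) + 1 ∨ w (r + 1) = w r + 1) (hpsi : crossing R n e ℓ κ r v = 0) :
    (X (r + 1) : YPoly) • v = (X r : YPoly) • v := by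
  rcases mem_liftedWeightSpace.mp hv with rfl | ⟨hw, hx⟩
  · simp only [smul_zero]
  rw [crossing_apply (by omega)] at hpsi
  rw [X_smul_of_lt hr, X_smul_of_lt (by omega)]
  exact hx.KyGen_mul_eq_of_adjacent (r := ⟨r, by omega⟩) (hw.residueWord_adjacent hadj) hpsi

lemma eq_zero_of_crossing_eq_zero_of_braid (hr : r + 2 < n)
    (hv : v ∈ liftedWeightSpace R ℓ κ t w) (h₀ : w (r + 2) = w r)
    (hadj : w r = w (r + 1) + 1 ∨ w (r + 1) = w r + 1) (hpsi : crossing R n e ℓ κ r v = 0)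
    (hpsi' : crossing R n e ℓ κ (r + 1) v = 0) : v = 0 := by
  rcases mem_liftedWeightSpace.mp hv with rfl | ⟨hw, hx⟩
  · rfl
  rw [crossing_apply (by omega)] at hpsi hpsi'
  exact hx.eq_zero_of_braid (r := ⟨r, by omega⟩) (by change r + 1 < n - 1; omega)
    ((hw.residueWord_eq_iff _ _).mpr h₀) (hw.residueWord_adjacent hadj) hpsi hpsi'

lemma X_zero_pow_smul_eq_zero (hn : 0 < n) (hv : v ∈ liftedWeightSpace R ℓ κ t w) :
    (X 0 ^ chargesEq (liftedCharge ℓ κ t) (w 0) : YPoly) • v = 0 := by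
  rcases mem_liftedWeightSpace.mp hv with rfl | ⟨hw, hx⟩
  · rw [smul_zero]
  · rw [X_pow_smul_of_lt hn, chargesEq_liftedCharge hw hn]
    exact hx.KyGen_zero_pow_mul_eq_zero hn

variable (R n ℓ κ) in
theorem isLinearKLRModule_liftedWeightSpace (t : ZMod e) :
    IsLinearKLRModule n (liftedCharge ℓ κ t) (liftedWeightSpace R ℓ κ t)
      (crossing R n e ℓ κ) where
  psi_mem := crossing_mem
  psi_X_smul := crossing_X_smul
  psi_X_left_smul := crossing_X_left_smul
  psi_X_right_smul := crossing_X_right_smul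
  psi_psi := crossing_crossing
  eq_zero_of_far := eq_zero_of_crossing_eq_zero_of_far
  X_smul_eq_of_adjacent := X_smul_eq_of_crossing_eq_zero
  eq_zero_of_braid := eq_zero_of_crossing_eq_zero_of_braid
  cyc := X_zero_pow_smul_eq_zero

end LiftedWeightSpace

theorem HasWeight.KyGen_pow_mul_eq_zero_of_forall_ne {i : Fin n → ZMod e} (ht : ∀ j, i j ≠ t)
    {x : KLR R n e ℓ κ} (hx : HasWeight i x) (r : Fin n) : KyGen R n e ℓ κ r ^ ℓ * x = 0 := by
  obtain ⟨w, hw, rfl⟩ := exists_residueWord_eq ht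
  have hmem : x ∈ liftedWeightSpace R ℓ κ t w := mem_liftedWeightSpace.mpr (.inr ⟨hw, hx⟩)
  have hX := (isLinearKLRModule_liftedWeightSpace R n ℓ κ t).X_pow_card_smul_eq_zero r.2 hmem
  rwa [Fintype.card_fin, X_pow_smul_of_lt r.2] at hX

end DotAction

lemma sum_KeGen (R : Type*) [CommRing R] (n e ℓ : ℕ) [NeZero e] (κ : ℕ → ℤ) :
    ∑ i, KeGen R n e ℓ κ i = 1 := by
  have hrel := RingQuot.mkAlgHom_rel R
    (KLRRel.complete (R := R) (n := n) (e := e) (ℓ := ℓ) (κ := κ))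
  rwa [map_sum, map_one] at hrel

theorem y_ell_nilpotent_general (n ℓ e : ℕ) (hen : n < e) [NeZero e] (κ : ℕ → ℤ) (R : Type*)
    [CommRing R] (r : Fin n) : KyGen R n e ℓ κ r ^ ℓ = 0 := by
  rw [← mul_one (KyGen R n e ℓ κ r ^ ℓ), ← sum_KeGen, Finset.mul_sum]
  refine Finset.sum_eq_zero fun i _ => ?_
  obtain ⟨t, ht⟩ : ∃ t, ∀ j, i j ≠ t := by
    by_contra! hsurj
    have hcard := Fintype.card_le_of_surjective i hsurj
    rw [ZMod.card, Fintype.card_fin] at hcard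
    omega
  exact (hasWeight_KeGen i).KyGen_pow_mul_eq_zero_of_forall_ne ht r

/-- Hoffnung–Lauda nilpotency, `e > n` case: in the cyclotomic
quiver Hecke algebra `R_n^Λ(K)` with `e > n`, one has `y_r^ℓ = 0` where `ℓ` is
the level. -/
theorem y_ell_nilpotent (n ℓ e : ℕ) (hℓ : 1 ≤ ℓ) (hen : n < e) [NeZero e]
    (κ : ℕ → ℤ) (hκ : ∀ l, l + 1 < ℓ → (n : ℤ) ≤ κ l - κ (l + 1))
    (K : Type) [Field K] (ξ : Kˣ)
    (hξ1 : qint (ξ : K) (e : ℤ) = 0)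
    (hξ2 : ∀ k : ℕ, 1 ≤ k → k < e → qint (ξ : K) (k : ℤ) ≠ 0)
    (r : Fin n) :
    KyGen K n e ℓ κ r ^ ℓ = 0 :=
  y_ell_nilpotent_general n ℓ e hen κ K r

end Paper
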